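/- arXiv:2405.02729 — 2 statements merged into one kernel-verified Lean document; each statement's English description precedes it below -/
import Mathlib

section
/- Let τ ∈ T_pc^∞(I). Then there exists a non-increasing, non-negative function f* ∈ L¹(I,λ) with ∫₀¹ f* dλ = 1 such that the probability measure μ = f*·λ is τ-invariant (i.e., μ(τ⁻¹(A)) = μ(A) for every Borel set A ⊆ [0,1]). Moreover μ is the unique τ-invariant probability measure absolutely continuous with respect to λ. -/
open MeasureTheory Set Filter

/-- Lebesgue measure on the unit interval `I = [0,1]`. -/
noncomputable def lam : MeasureTheory.Measure ℝ := MeasureTheory.volume.restrict (Set.Icc 0 1)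

/-- The class `T_pc^∞(I)` of piecewise convex maps with countably many branches, with
partition points `0 = a₀ < a₁ ≤ 1`, branches on `[a i, c i) ⊆ [a₁, 1]`, first branch on
`[0, a₁)` with right derivative `α₁ > 1` at `0`, and right derivatives `d i = τ'(a i) > 0`
at the left endpoints with `∑ 1 / d i < ∞`. -/
structure TpcInfty (τ : ℝ → ℝ) (a₁ α₁ : ℝ) (a c d : ℕ → ℝ) : Prop where
  mapsTo : Set.MapsTo τ (Set.Icc 0 1) (Set.Icc 0 1)
  a₁_pos : 0 < a₁
  a₁_le : a₁ ≤ 1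
  branch_sub : ∀ i, a₁ ≤ a i ∧ a i < c i ∧ c i ≤ 1
  branch_disj : Pairwise (Function.onFun Disjoint fun i => Set.Ico (a i) (c i))
  cover : ∃ E : Set ℝ, E.Countable ∧
    Set.Icc (0:ℝ) 1 ⊆ (Set.Ico 0 a₁ ∪ ⋃ i, Set.Ico (a i) (c i)) ∪ E
  cont₀ : ContinuousOn τ (Set.Ico 0 a₁)
  conv₀ : ConvexOn ℝ (Set.Ico 0 a₁) τ
  diff₀ : ∀ x ∈ Set.Ico 0 a₁, DifferentiableWithinAt ℝ τ (Set.Ico 0 a₁) x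
  map₀ : τ 0 = 0
  deriv₀ : HasDerivWithinAt τ α₁ (Set.Ici 0) 0
  α₁_gt : 1 < α₁
  cont : ∀ i, ContinuousOn τ (Set.Ico (a i) (c i))
  conv : ∀ i, ConvexOn ℝ (Set.Ico (a i) (c i)) τ
  diff : ∀ i, ∀ x ∈ Set.Ico (a i) (c i), DifferentiableWithinAt ℝ τ (Set.Ico (a i) (c i)) x
  map_a : ∀ i, τ (a i) = 0
  deriv_a : ∀ i, HasDerivWithinAt τ (d i) (Set.Ici (a i)) (a i)
  d_pos : ∀ i, 0 < d i
  sum_d : Summable fun i => 1 / d i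

/-!
A convex branch vanishing at its left end has a concave inverse, so push-forward under the map
preserves the measures whose distribution function is concave, that is, whose density is
non-increasing. The density of such a probability measure at `x` is at most `1 / x`; hence the
branches away from `0` contribute at most a constant `r` to the density of a push-forward, while
the first branch divides the supremum by its slope `d > 1` at `0`. The bound `M ↦ M / d + r`
keeps the densities of all iterates of Lebesgue measure below a fixed `M`, and a limit of their
Cesàro averages is an invariant probability measure.

For uniqueness, almost every orbit visits the branches away from `0` infinitely often, and by
convexity each visit contracts the cylinder containing the point by a definite factor. Cylinders
therefore shrink to points and any density is an `L¹` limit of functions constant on cylinders of a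
common length `n`, whose push-forwards under the `n`-th iterate are sums of measures with concave
distribution function. So every absolutely continuous invariant measure has a non-increasing
density. Two such nonzero measures both charge every neighbourhood of `0`, so they are never
mutually singular: this makes every absolutely continuous invariant probability measure ergodic,
and leaves only one.
-/

open scoped Topology ENNReal NNReal

/-! ### Invariant measures from dominated averages -/

section DominatedMeasures

variable {α : Type*} [MeasurableSpace α]

theorem hasSum_measureReal_sum {ι : Type*} {κ : ι → Measure α} [IsFiniteMeasure (Measure.sum κ)]
    {s : Set α} (hs : MeasurableSet s) :
    HasSum (fun i => (κ i).real s) ((Measure.sum κ).real s) := by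
  have hfin : ∑' i, κ i s ≠ ⊤ := Measure.sum_apply κ hs ▸ measure_ne_top _ _
  rw [measureReal_def, Measure.sum_apply κ hs,
    ENNReal.tsum_toReal_eq (ENNReal.ne_top_of_tsum_ne_top hfin)]
  exact ENNReal.hasSum_toReal hfin

theorem tendsto_measure_iUnion_of_dominated {β : Type*} {U : Filter β} {κ : Measure α}
    [IsFiniteMeasure κ] {μ : β → Measure α} (hμ : ∀ n, μ n ≤ κ) {s : ℕ → Set α}
    (hs : ∀ i, MeasurableSet (s i)) (hdisj : Pairwise (Function.onFun Disjoint s)) {l : ℕ → ℝ≥0∞}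
    (hl : ∀ i, Tendsto (fun n => μ n (s i)) U (𝓝 (l i))) :
    Tendsto (fun n => μ n (⋃ i, s i)) U (𝓝 (∑' i, l i)) := by
  rcases U.eq_or_neBot with rfl | hU
  · exact tendsto_bot
  have hκ_sum : ∑' i, κ (s i) ≠ ⊤ := by
    rw [← measure_iUnion hdisj hs]; exact measure_ne_top _ _
  have hl_le (i) : l i ≤ κ (s i) := le_of_tendsto' (hl i) fun n => hμ n _
  have hl_ne (i) : l i ≠ ⊤ := ne_top_of_le_ne_top (measure_ne_top _ _) (hl_le i)
  have hl_sum : ∑' i, l i ≠ ⊤ := ne_top_of_le_ne_top hκ_sum (ENNReal.tsum_le_tsum hl_le)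
  have hμ_ne (n i) : μ n (s i) ≠ ⊤ := ne_top_of_le_ne_top (measure_ne_top _ _) (hμ n _)
  have hμ_sum (n) : ∑' i, μ n (s i) ≠ ⊤ :=
    ne_top_of_le_ne_top hκ_sum (ENNReal.tsum_le_tsum fun i => hμ n _)
  simp_rw [fun n => measure_iUnion (μ := μ n) hdisj hs]
  rw [← ENNReal.tendsto_toReal_iff hμ_sum hl_sum]
  simp_rw [fun n => ENNReal.tsum_toReal_eq (hμ_ne n), ENNReal.tsum_toReal_eq hl_ne]
  refine tendsto_tsum_of_dominated_convergence (ENNReal.summable_toReal hκ_sum)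
    (fun i => (ENNReal.tendsto_toReal (hl_ne i)).comp (hl i)) (.of_forall fun n i => ?_)
  rw [Real.norm_of_nonneg ENNReal.toReal_nonneg]
  exact ENNReal.toReal_mono (measure_ne_top _ _) (hμ n _)

theorem exists_measure_tendsto_of_le {β : Type*} (U : Ultrafilter β) {κ : Measure α}
    [IsFiniteMeasure κ] {μ : β → Measure α} (hμ : ∀ n, μ n ≤ κ) :
    ∃ ν ≤ κ, ∀ s, MeasurableSet s → Tendsto (fun n => μ n s) U (𝓝 (ν s)) := by
  have hconv (s : Set α) : ∃ l, Tendsto (fun n => μ n s) U (𝓝 l) := by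
    obtain ⟨l, -, hl⟩ := isCompact_univ.ultrafilter_le_nhds (U.map fun n => μ n s) (by simp)
    exact ⟨l, hl⟩
  choose l hl using hconv
  have l_empty : l ∅ = 0 := tendsto_nhds_unique (hl ∅) (by simp)
  let ν : Measure α := Measure.ofMeasurable (fun s _ => l s) l_empty fun f hf hdisj =>
    tendsto_nhds_unique (hl _) (tendsto_measure_iUnion_of_dominated hμ hf hdisj fun i => hl (f i))
  have hν {s : Set α} (hs : MeasurableSet s) : ν s = l s := Measure.ofMeasurable_apply s hs
  refine ⟨ν, Measure.le_iff.2 fun s hs => ?_, fun s hs => (hν hs).symm ▸ hl s⟩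
  exact (hν hs).trans_le (le_of_tendsto' (hl s) fun n => hμ n s)

/-- The Cesàro averages of the push-forwards `μ.map T^[k]`, used in the Krylov–Bogoliubov argument;
the `n`-th one averages over `k ≤ n`. -/
noncomputable def cesaroMeasure (T : α → α) (μ : Measure α) (n : ℕ) : Measure α :=
  ((n + 1 : ℕ) : ℝ≥0∞)⁻¹ • ∑ k ∈ Finset.range (n + 1), μ.map T^[k]

theorem cesaroMeasure_apply (T : α → α) (μ : Measure α) (n : ℕ) (s : Set α) :
    cesaroMeasure T μ n s =
      ((n + 1 : ℕ) : ℝ≥0∞)⁻¹ * ∑ k ∈ Finset.range (n + 1), μ.map T^[k] s := by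
  simp only [cesaroMeasure, Measure.smul_apply, Measure.finsetSum_apply, smul_eq_mul]

theorem inv_succ_mul_sum_const (n : ℕ) (b : ℝ≥0∞) :
    ((n + 1 : ℕ) : ℝ≥0∞)⁻¹ * ∑ _k ∈ Finset.range (n + 1), b = b := by
  rw [Finset.sum_const, Finset.card_range, nsmul_eq_mul, ← mul_assoc,
    ENNReal.inv_mul_cancel (by simp) (ENNReal.natCast_ne_top _), one_mul]

theorem cesaroMeasure_le {T : α → α} {κ μ : Measure α} (h : ∀ n, μ.map T^[n] ≤ κ) (n : ℕ) :
    cesaroMeasure T μ n ≤ κ := by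
  refine Measure.le_iff'.2 fun s => ?_
  rw [cesaroMeasure_apply, ← inv_succ_mul_sum_const n (κ s)]
  exact mul_le_mul_right (Finset.sum_le_sum fun k _ => Measure.le_iff'.1 (h k) s) _

theorem cesaroMeasure_univ {T : α → α} (hT : Measurable T) (μ : Measure α) (n : ℕ) :
    cesaroMeasure T μ n univ = μ univ := by
  simp_rw [cesaroMeasure_apply, Measure.map_apply (hT.iterate _) .univ, preimage_univ,
    inv_succ_mul_sum_const]

theorem cesaroMeasure_preimage_add {T : α → α} (hT : Measurable T) (μ : Measure α) (n : ℕ)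
    {s : Set α} (hs : MeasurableSet s) :
    cesaroMeasure T μ n (T ⁻¹' s) + ((n + 1 : ℕ) : ℝ≥0∞)⁻¹ * μ s =
      cesaroMeasure T μ n s + ((n + 1 : ℕ) : ℝ≥0∞)⁻¹ * μ.map T^[n + 1] s := by
  simp_rw [cesaroMeasure_apply, ← mul_add, ← Finset.sum_range_succ,
    Finset.sum_range_succ' _ (n + 1)]
  congr 2
  · refine Finset.sum_congr rfl fun k _ => ?_
    rw [Function.iterate_succ', ← Measure.map_map hT (hT.iterate k), Measure.map_apply hT hs]
  · simp

theorem exists_measurePreserving_le {T : α → α} (hT : Measurable T) {κ μ₀ : Measure α}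
    [IsFiniteMeasure κ] [IsProbabilityMeasure μ₀] (h : ∀ n, μ₀.map T^[n] ≤ κ) :
    ∃ μ ≤ κ, IsProbabilityMeasure μ ∧ MeasurePreserving T μ μ := by
  obtain ⟨μ, hμκ, hμ⟩ := exists_measure_tendsto_of_le (hyperfilter ℕ) (cesaroMeasure_le h)
  have tendsto_zero {b : ℕ → ℝ≥0∞} (hb : ∀ n, b n ≤ 1) :
      Tendsto (fun n => ((n + 1 : ℕ) : ℝ≥0∞)⁻¹ * b n) (hyperfilter ℕ) (𝓝 0) := by
    refine tendsto_of_tendsto_of_tendsto_of_le_of_le tendsto_const_nhds ?_ (fun n => zero_le)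
      fun n => mul_le_of_le_one_right' (hb n)
    exact (ENNReal.tendsto_inv_nat_nhds_zero.comp (tendsto_add_atTop_nat 1)).mono_left
      Nat.hyperfilter_le_atTop
  have (n : ℕ) : IsProbabilityMeasure (μ₀.map T^[n]) :=
    Measure.isProbabilityMeasure_map (hT.iterate n).aemeasurable
  refine ⟨μ, hμκ, ⟨?_⟩, hT, Measure.ext fun s hs => ?_⟩
  · exact tendsto_nhds_unique (hμ univ .univ) (by simp [cesaroMeasure_univ hT])
  rw [Measure.map_apply hT hs]
  have lim_left := (hμ _ (hT hs)).add (tendsto_zero fun _ => prob_le_one (μ := μ₀) (s := s))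
  have lim_right := (hμ s hs).add
    (tendsto_zero fun n => prob_le_one (μ := μ₀.map T^[n + 1]) (s := s))
  simp_rw [cesaroMeasure_preimage_add hT μ₀ _ hs] at lim_left
  simpa only [add_zero] using tendsto_nhds_unique lim_left lim_right

end DominatedMeasures

/-! ### Approximating densities by functions of a code -/

section CountableCodes

theorem tendsto_invFunOn_of_eventually_dist_lt {X : Type*} [PseudoMetricSpace X] [Nonempty X]
    {β : ℕ → Type*} {φ : ∀ n, X → β n} {R : Set X}
    (hsep : ∀ x ∈ R, ∀ ε > 0, ∀ᶠ n in atTop, ∀ y ∈ R, φ n y = φ n x → dist y x < ε)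
    {x : X} (hx : x ∈ R) :
    Tendsto (fun n => Function.invFunOn (φ n) R (φ n x)) atTop (𝓝 x) := by
  refine Metric.tendsto_nhds.2 fun ε hε => (hsep x hx ε hε).mono fun n hn => ?_
  exact hn _ (Function.invFunOn_mem ⟨x, hx, rfl⟩) (Function.invFunOn_eq ⟨x, hx, rfl⟩)

variable {X : Type*} [MeasurableSpace X]

theorem withDensity_comp_eq_sum {β : Type*} [MeasurableSpace β] [MeasurableSingletonClass β]
    [Countable β] {φ : X → β} (hφ : Measurable φ) (q : β → ℝ≥0∞) (μ : Measure X) :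
    μ.withDensity (fun x => q (φ x)) = Measure.sum fun b => q b • μ.restrict (φ ⁻¹' {b}) := by
  have hmeas (b : β) : MeasurableSet (φ ⁻¹' {b}) := hφ (measurableSet_singleton b)
  have hdisj : Pairwise (Function.onFun Disjoint fun b => φ ⁻¹' {b}) := fun _ _ hbb' =>
    (disjoint_singleton.2 hbb').preimage φ
  have decomp : μ = Measure.sum fun b => μ.restrict (φ ⁻¹' {b}) := by
    rw [← Measure.restrict_iUnion hdisj hmeas, ← preimage_iUnion, iUnion_of_singleton,
      preimage_univ, Measure.restrict_univ]
  conv_lhs => rw [decomp, withDensity_sum]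
  refine congrArg Measure.sum (funext fun b => ?_)
  rw [← withDensity_const]
  exact withDensity_congr_ae (ae_restrict_of_forall_mem (hmeas b) fun x hx => congrArg q hx)

variable [PseudoMetricSpace X] {β : ℕ → Type*} [∀ n, MeasurableSpace (β n)]
  [∀ n, DiscreteMeasurableSpace (β n)] {μ : Measure X} [IsFiniteMeasure μ] {φ : ∀ n, X → β n}
  {R : Set X}

theorem integrable_boundedContinuousFunction_comp_code {n : ℕ} (hφ : Measurable (φ n))
    (v : BoundedContinuousFunction X ℝ) (rep : β n → X) :
    Integrable (fun x => v (rep (φ n x))) μ :=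
  .of_bound ((Measurable.of_discrete (f := fun b => v (rep b))).comp hφ).aestronglyMeasurable ‖v‖
    (.of_forall fun _ => v.norm_coe_le_norm _)

variable [BorelSpace X]

theorem tendsto_integral_abs_boundedContinuousFunction_sub [Nonempty X]
    (hφ : ∀ n, Measurable (φ n)) (hR : ∀ᵐ x ∂μ, x ∈ R)
    (hsep : ∀ x ∈ R, ∀ ε > 0, ∀ᶠ n in atTop, ∀ y ∈ R, φ n y = φ n x → dist y x < ε)
    (v : BoundedContinuousFunction X ℝ) :
    Tendsto (fun n => ∫ x, |v (Function.invFunOn (φ n) R (φ n x)) - v x| ∂μ) atTop (𝓝 0) := by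
  rw [← integral_zero X ℝ (μ := μ)]
  refine tendsto_integral_of_dominated_convergence (fun _ => 2 * ‖v‖) (fun n => ?_)
    (integrable_const _) (fun n => .of_forall fun x => ?_) (hR.mono fun x hx => ?_)
  · exact ((integrable_boundedContinuousFunction_comp_code (hφ n) v _).sub
      (v.integrable μ)).abs.aestronglyMeasurable
  · rw [Real.norm_eq_abs, abs_abs, ← Real.dist_eq]
    exact v.dist_le_two_norm _ _
  · have := (v.continuous.tendsto x).comp (tendsto_invFunOn_of_eventually_dist_lt hsep hx)
    simpa using (this.sub_const (v x)).abs

theorem exists_integral_abs_comp_sub_le (hφ : ∀ n, Measurable (φ n)) (hR : ∀ᵐ x ∂μ, x ∈ R)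
    (hsep : ∀ x ∈ R, ∀ ε > 0, ∀ᶠ n in atTop, ∀ y ∈ R, φ n y = φ n x → dist y x < ε)
    {g : X → ℝ} (hg : Integrable g μ) (g_nonneg : ∀ x, 0 ≤ g x) {ε : ℝ} (hε : 0 < ε) :
    ∃ (n : ℕ) (q : β n → ℝ≥0), Integrable (fun x => (q (φ n x) : ℝ)) μ ∧
      ∫ x, |q (φ n x) - g x| ∂μ ≤ ε := by
  rcases isEmpty_or_nonempty X with hX | hX
  · exact ⟨0, 0, by simp [Measure.eq_zero_of_isEmpty], by
      simpa [Measure.eq_zero_of_isEmpty] using hε.le⟩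
  obtain ⟨v, hv_dist, hv⟩ := hg.exists_boundedContinuous_integral_sub_le (half_pos hε)
  obtain ⟨n, hn⟩ := ((tendsto_integral_abs_boundedContinuousFunction_sub hφ hR hsep
    v).eventually_le_const (half_pos hε)).exists
  let w (x : X) : ℝ := v (Function.invFunOn (φ n) R (φ n x))
  have hw : Integrable w μ := integrable_boundedContinuousFunction_comp_code (hφ n) v _
  refine ⟨n, fun b => (v (Function.invFunOn (φ n) R b)).toNNReal, hw.pos_part, ?_⟩
  have pointwise (x : X) : |max (w x) 0 - g x| ≤ |w x - v x| + ‖g x - v x‖ := by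
    rw [Real.norm_eq_abs, abs_sub_comm (g x)]
    calc |max (w x) 0 - g x| ≤ |w x - g x| := by
          simpa [max_eq_left (g_nonneg x)] using abs_max_sub_max_le_abs (w x) (g x) 0
      _ ≤ |w x - v x| + |v x - g x| := abs_sub_le _ _ _
  calc ∫ x, |max (w x) 0 - g x| ∂μ ≤ ∫ x, (|w x - v x| + ‖g x - v x‖) ∂μ :=
        integral_mono (hw.pos_part.sub hg).abs ((hw.sub hv).abs.add (hg.sub hv).norm) pointwise
    _ = ∫ x, |w x - v x| ∂μ + ∫ x, ‖g x - v x‖ ∂μ :=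
        integral_add (hw.sub hv).abs (hg.sub hv).norm
    _ ≤ ε / 2 + ε / 2 := add_le_add hn hv_dist
    _ = ε := add_halves ε

end CountableCodes

theorem abs_measureReal_withDensity_sub_le {X : Type*} [MeasurableSpace X] {μ : Measure X}
    {u v : X → ℝ} (hu : Integrable u μ) (hv : Integrable v μ) (u_nonneg : ∀ x, 0 ≤ u x)
    (v_nonneg : ∀ x, 0 ≤ v x) {s : Set X} (hs : MeasurableSet s) :
    |(μ.withDensity fun x => .ofReal (u x)).real s - (μ.withDensity fun x => .ofReal (v x)).real s|
      ≤ ∫ x, |u x - v x| ∂μ := by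
  have real_eq {w : X → ℝ} (hw : Integrable w μ) (w_nonneg : ∀ x, 0 ≤ w x) :
      (μ.withDensity fun x => .ofReal (w x)).real s = ∫ x in s, w x ∂μ := by
    rw [measureReal_def, withDensity_apply _ hs,
      integral_eq_lintegral_of_nonneg_ae (.of_forall w_nonneg) hw.aestronglyMeasurable.restrict]
  rw [real_eq hu u_nonneg, real_eq hv v_nonneg, ← integral_sub hu.integrableOn hv.integrableOn]
  exact abs_integral_le_integral_abs.trans
    (setIntegral_le_integral (hu.sub hv).abs (.of_forall fun x => abs_nonneg _))

/-! ### Concave distribution functions -/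

section ConcaveRightDeriv

variable {S : Set ℝ} {F : ℝ → ℝ} {x : ℝ}

theorem hasDerivWithinAt_Ioi_of_concaveOn (hF : ConcaveOn ℝ S F) (hx : x ∈ interior S) :
    HasDerivWithinAt F (derivWithin F (Ioi x) x) (Ioi x) x := by
  simpa [derivWithin.neg] using (hF.neg.hasDerivWithinAt_rightDeriv_of_mem_interior hx).neg

theorem antitoneOn_derivWithin_Ioi_of_concaveOn (hF : ConcaveOn ℝ S F) :
    AntitoneOn (fun x => derivWithin F (Ioi x) x) (interior S) := fun x hx y hy hxy => by
  simpa [derivWithin.neg] using hF.neg.monotoneOn_rightDeriv hx hy hxy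

theorem derivWithin_Ioi_le_slope_of_concaveOn (hF : ConcaveOn ℝ S F) {w : ℝ} (hw : w ∈ S)
    (hx : x ∈ interior S) (hwx : w < x) : derivWithin F (Ioi x) x ≤ slope F w x := by
  have left : slope (-F) w x ≤ derivWithin (-F) (Iio x) x :=
    hF.neg.slope_le_leftDeriv_of_mem_interior hw hx hwx
  have right := hF.neg.leftDeriv_le_rightDeriv_of_mem_interior hx
  rw [derivWithin.neg (s := Ioi x)] at right
  have slope_neg : slope (-F) w x = -slope F w x := by
    simp only [slope_def_field, Pi.neg_apply]; ring
  linarith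

end ConcaveRightDeriv

section UnitInterval

instance : IsProbabilityMeasure lam := ⟨by simp [lam]⟩

instance : NullSingletonClass lam :=
  inferInstanceAs (NullSingletonClass (volume.restrict (Icc 0 1)))

theorem lam_eq_restrict_Ioc : lam = volume.restrict (Ioc 0 1) := restrict_Ioc_eq_restrict_Icc.symm

theorem ae_lam_mem_Ioc : ∀ᵐ x ∂lam, x ∈ Ioc (0 : ℝ) 1 :=
  lam_eq_restrict_Ioc ▸ ae_restrict_mem measurableSet_Ioc

theorem lam_real_Iic {y : ℝ} (hy : 0 ≤ y) : lam.real (Iic y) = min y 1 := by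
  have : Iic y ∩ Icc 0 1 = Icc 0 (min y 1) := by
    ext x; simp only [mem_inter_iff, mem_Iic, mem_Icc, le_min_iff]; tauto
  rw [lam, measureReal_restrict_apply measurableSet_Iic, this,
    Real.volume_real_Icc_of_le (le_min hy zero_le_one), sub_zero]

theorem nullSingletonClass_of_absolutelyContinuous {α : Type*} [MeasurableSpace α] {κ μ : Measure α}
    [NullSingletonClass μ] (h : κ ≪ μ) : NullSingletonClass κ :=
  ⟨fun x => h (measure_singleton x)⟩

theorem continuous_measureReal_Iic (κ : Measure ℝ) [IsFiniteMeasure κ] [NullSingletonClass κ] :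
    Continuous fun y => κ.real (Iic y) := by
  have eq_primitive (y : ℝ) :
      κ.real (Iic y) = (∫ _ in (0 : ℝ)..y, (1 : ℝ) ∂κ) + κ.real (Iic 0) := by
    have := intervalIntegral.integral_Iic_sub_Iic (integrable_const (1 : ℝ) (μ := κ)).integrableOn
      (integrable_const (1 : ℝ)).integrableOn (a := 0) (b := y)
    simp only [setIntegral_const, smul_eq_mul, mul_one] at this
    rw [← this, sub_add_cancel]
  rw [funext eq_primitive]
  exact (intervalIntegral.continuous_primitive (fun _ _ => by simp) 0).add continuous_const

variable {κ ρ : Measure ℝ}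

theorem measure_Iic_zero (hκ : κ ≪ lam) : κ (Iic 0) = 0 := by
  refine hκ ((measureReal_eq_zero_iff (measure_ne_top _ _)).1 ?_)
  rw [lam_real_Iic le_rfl, min_eq_left zero_le_one]

theorem measure_Iic_eq_projIcc (hκ : κ ≪ lam) (y : ℝ) :
    κ (Iic y) = κ (Iic (projIcc 0 1 zero_le_one y : ℝ)) := by
  refine measure_congr ?_
  filter_upwards [hκ.ae_le ae_lam_mem_Ioc] with x hx
  refine propext (show x ≤ y ↔ x ≤ projIcc 0 1 zero_le_one y from ?_)
  rw [coe_projIcc, le_max_iff, le_min_iff]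
  grind [hx.1, hx.2]

theorem measure_ext_of_Iic_Icc [IsFiniteMeasure κ] (hκ : κ ≪ lam) (hρ : ρ ≪ lam)
    (h : ∀ y ∈ Icc (0 : ℝ) 1, κ (Iic y) = ρ (Iic y)) : κ = ρ :=
  Measure.ext_of_Iic κ ρ fun y => by
    rw [measure_Iic_eq_projIcc hκ, measure_Iic_eq_projIcc hρ, h _ (projIcc 0 1 zero_le_one y).2]

end UnitInterval

/-- The absolutely continuous finite measures on `[0, 1]` with concave distribution function
on `[0, ∞)`, that is, those with a non-increasing density with respect to `lam`.
Concavity of the distribution function is the form that push-forwards, sums and limits preserve. -/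
structure HasConcaveCDF (κ : Measure ℝ) : Prop where
  finite : IsFiniteMeasure κ
  ac : κ ≪ lam
  concaveOn : ConcaveOn ℝ (Ici 0) fun y => κ.real (Iic y)

theorem hasConcaveCDF_lam : HasConcaveCDF lam where
  finite := inferInstance
  ac := .rfl
  concaveOn := ((concaveOn_id (convex_Ici 0)).inf (concaveOn_const 1 (convex_Ici 0))).congr
    fun _ hy => (lam_real_Iic hy).symm

theorem hasConcaveCDF_of_forall_approx {κ : Measure ℝ} [IsFiniteMeasure κ] (hκ : κ ≪ lam)
    (h : ∀ ε > 0, ∃ ρ, HasConcaveCDF ρ ∧ ∀ y, |ρ.real (Iic y) - κ.real (Iic y)| ≤ ε) :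
    HasConcaveCDF κ := by
  refine ⟨inferInstance, hκ, convex_Ici 0, fun y hy z hz p q hp hq hpq => ?_⟩
  refine le_of_forall_pos_le_add fun ε hε => ?_
  obtain ⟨ρ, hρ, hρκ⟩ := h (ε / 2) (half_pos hε)
  have hconc := hρ.concaveOn.2 hy hz hp hq hpq
  simp only [smul_eq_mul] at hconc ⊢
  have hy' := mul_le_mul_of_nonneg_left (abs_le.1 (hρκ y)).1 hp
  have hz' := mul_le_mul_of_nonneg_left (abs_le.1 (hρκ z)).1 hq
  have hpq' := (abs_le.1 (hρκ (p * y + q * z))).2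
  obtain rfl : q = 1 - p := by linarith
  nlinarith

namespace HasConcaveCDF

variable {κ : Measure ℝ}

theorem smul (h : HasConcaveCDF κ) {c : ℝ≥0∞} (hc : c ≠ ⊤) : HasConcaveCDF (c • κ) where
  finite := have := h.finite; κ.smul_finite hc
  ac := h.ac.smul_left c
  concaveOn := by
    simp_rw [measureReal_ennreal_smul_apply]
    exact h.concaveOn.smul c.toReal_nonneg

theorem sum {ι : Type*} {κ : ι → Measure ℝ} [IsFiniteMeasure (Measure.sum κ)]
    (h : ∀ i, HasConcaveCDF (κ i)) : HasConcaveCDF (Measure.sum κ) where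
  finite := inferInstance
  ac := Measure.absolutelyContinuous_sum_left fun i => (h i).ac
  concaveOn := by
    have hasSum (y : ℝ) := hasSum_measureReal_sum (κ := κ) (measurableSet_Iic (a := y))
    refine ⟨convex_Ici 0, fun y hy z hz p q hp hq hpq => ?_⟩
    exact hasSum_le (fun i => (h i).concaveOn.2 hy hz hp hq hpq)
      (((hasSum y).mul_left p).add ((hasSum z).mul_left q)) (hasSum _)

end HasConcaveCDF

/-- The right derivative of the distribution function of `κ`. Where `κ` has a concave distribution
function, this is a version of its density. -/
noncomputable def cdfRightDeriv (κ : Measure ℝ) (x : ℝ) : ℝ :=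
  derivWithin (fun y => κ.real (Iic y)) (Ioi x) x

theorem cdfRightDeriv_nonneg (κ : Measure ℝ) [IsFiniteMeasure κ] (x : ℝ) : 0 ≤ cdfRightDeriv κ x :=
  MonotoneOn.derivWithin_nonneg fun _ _ _ _ hyz => measureReal_mono (Iic_subset_Iic.2 hyz)

theorem measurable_cdfRightDeriv (κ : Measure ℝ) : Measurable (cdfRightDeriv κ) :=
  measurable_derivWithin_Ioi _

namespace HasConcaveCDF

variable {κ ρ : Measure ℝ}

theorem antitoneOn_cdfRightDeriv (h : HasConcaveCDF κ) : AntitoneOn (cdfRightDeriv κ) (Ioi 0) :=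
  interior_Ici (a := (0 : ℝ)) ▸ antitoneOn_derivWithin_Ioi_of_concaveOn h.concaveOn

theorem cdfRightDeriv_mul_le (h : HasConcaveCDF κ) {x : ℝ} (hx : 0 < x) :
    cdfRightDeriv κ x * x ≤ κ.real (Iic x) := by
  rw [← le_div_iff₀ hx]
  refine (derivWithin_Ioi_le_slope_of_concaveOn h.concaveOn self_mem_Ici
    (interior_Ici (a := (0 : ℝ)) ▸ hx) hx).trans_eq ?_
  simp [slope_def_field, measureReal_def, measure_Iic_zero h.ac]

theorem lintegral_cdfRightDeriv (h : HasConcaveCDF κ) {y : ℝ} (hy : 0 ≤ y) :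
    ∫⁻ x in Ioc 0 y, .ofReal (cdfRightDeriv κ x) = κ (Iic y) := by
  have := h.finite
  have := nullSingletonClass_of_absolutelyContinuous h.ac
  have cont := (continuous_measureReal_Iic κ).continuousOn (s := Icc 0 y)
  have hderiv (x : ℝ) (hx : x ∈ Ioo 0 y) :
      HasDerivWithinAt (fun y => κ.real (Iic y)) (cdfRightDeriv κ x) (Ioi x) x :=
    hasDerivWithinAt_Ioi_of_concaveOn h.concaveOn (interior_Ici (a := (0 : ℝ)) ▸ hx.1)
  have hint : IntegrableOn (cdfRightDeriv κ) (Ioc 0 y) :=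
    intervalIntegral.integrableOn_deriv_right_of_nonneg cont hderiv
      fun x _ => cdfRightDeriv_nonneg κ x
  have ftc := intervalIntegral.integral_eq_sub_of_hasDeriv_right_of_le hy cont hderiv
    ((intervalIntegrable_iff_integrableOn_Ioc_of_le hy).2 hint)
  rw [← ofReal_integral_eq_lintegral_ofReal hint (.of_forall (cdfRightDeriv_nonneg κ)),
    ← intervalIntegral.integral_of_le hy, ftc]
  simp [measureReal_def, measure_Iic_zero h.ac]

theorem withDensity_cdfRightDeriv (h : HasConcaveCDF κ) :
    lam.withDensity (fun x => .ofReal (cdfRightDeriv κ x)) = κ := by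
  have := h.finite
  refine (measure_ext_of_Iic_Icc h.ac (withDensity_absolutelyContinuous _ _) fun y hy => ?_).symm
  have : Iic y ∩ Ioc 0 1 = Ioc 0 y := by
    ext x; simp only [mem_inter_iff, mem_Iic, mem_Ioc]; grind [hy.2]
  rw [withDensity_apply _ measurableSet_Iic, lam_eq_restrict_Ioc,
    Measure.restrict_restrict measurableSet_Iic, this, h.lintegral_cdfRightDeriv hy.1]

theorem restrict_le_smul_lam (h : HasConcaveCDF κ) {s : Set ℝ} (hs : MeasurableSet s) {K : ℝ}
    (hK : ∀ t ∈ s, 0 < t → κ.real (Iic t) ≤ K * t) : κ.restrict s ≤ ENNReal.ofReal K • lam := by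
  have density_le : ∀ᵐ t ∂lam.restrict s, ENNReal.ofReal (cdfRightDeriv κ t) ≤ .ofReal K := by
    rw [ae_restrict_iff' hs]
    filter_upwards [ae_lam_mem_Ioc] with t ht hts
    exact ENNReal.ofReal_le_ofReal
      (le_of_mul_le_mul_right ((h.cdfRightDeriv_mul_le ht.1).trans (hK t hts ht.1)) ht.1)
  calc κ.restrict s = (lam.restrict s).withDensity fun t => .ofReal (cdfRightDeriv κ t) := by
        rw [← restrict_withDensity hs, h.withDensity_cdfRightDeriv]
    _ ≤ (lam.restrict s).withDensity fun _ => .ofReal K := withDensity_mono density_le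
    _ = ENNReal.ofReal K • lam.restrict s := withDensity_const _
    _ ≤ ENNReal.ofReal K • lam := by gcongr; exact Measure.restrict_le_self

theorem exists_restrict_lam_absolutelyContinuous (h : HasConcaveCDF κ) (h0 : κ ≠ 0) :
    ∃ δ > 0, lam.restrict (Iic δ) ≪ κ := by
  obtain ⟨δ, δ_pos, hδ⟩ : ∃ δ > 0, 0 < cdfRightDeriv κ δ := by
    by_contra! hle
    refine h0 ?_
    rw [← h.withDensity_cdfRightDeriv, ← withDensity_zero (μ := lam)]
    exact withDensity_congr_ae <| ae_lam_mem_Ioc.mono fun x hx =>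
      ENNReal.ofReal_of_nonpos (hle x hx.1)
  refine ⟨δ, δ_pos, ?_⟩
  have density_ne : ∀ᵐ x ∂lam.restrict (Iic δ), ENNReal.ofReal (cdfRightDeriv κ x) ≠ 0 := by
    rw [ae_restrict_iff' measurableSet_Iic]
    filter_upwards [ae_lam_mem_Ioc] with x hx hxδ
    have : cdfRightDeriv κ δ ≤ cdfRightDeriv κ x := h.antitoneOn_cdfRightDeriv hx.1 δ_pos hxδ
    exact (ENNReal.ofReal_pos.2 (hδ.trans_le this)).ne'
  refine (withDensity_absolutelyContinuous'
    (measurable_cdfRightDeriv κ).ennreal_ofReal.aemeasurable density_ne).trans ?_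
  rw [← restrict_withDensity measurableSet_Iic, h.withDensity_cdfRightDeriv]
  exact Measure.restrict_le_self.absolutelyContinuous

theorem not_mutuallySingular (hκ : HasConcaveCDF κ) (hρ : HasConcaveCDF ρ) (hκ0 : κ ≠ 0)
    (hρ0 : ρ ≠ 0) : ¬ κ ⟂ₘ ρ := fun hsing => by
  obtain ⟨δ, δ_pos, hδ⟩ := hκ.exists_restrict_lam_absolutelyContinuous hκ0
  obtain ⟨η, η_pos, hη⟩ := hρ.exists_restrict_lam_absolutelyContinuous hρ0
  have min_pos : 0 < min δ η := lt_min δ_pos η_pos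
  have restrict_mono {s t : ℝ} (hst : s ≤ t) : lam.restrict (Iic s) ≪ lam.restrict (Iic t) :=
    (Measure.restrict_mono_set _ (Iic_subset_Iic.2 hst)).absolutelyContinuous
  have hsing' : lam.restrict (Iic (min δ η)) ⟂ₘ lam.restrict (Iic (min δ η)) :=
    hsing.mono_ac ((restrict_mono (min_le_left _ _)).trans hδ)
      ((restrict_mono (min_le_right _ _)).trans hη)
  rw [Measure.MutuallySingular.self_iff, Measure.restrict_eq_zero] at hsing'
  have : lam.real (Iic (min δ η)) = 0 := by rw [measureReal_def, hsing', ENNReal.toReal_zero]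
  rw [lam_real_Iic min_pos.le] at this
  exact (lt_min min_pos one_pos).ne' this

theorem cdfRightDeriv_le (h : HasConcaveCDF κ) {M : ℝ≥0} (hM : κ ≤ M • lam) {x : ℝ}
    (hx : x ∈ Ioc (0 : ℝ) 1) : cdfRightDeriv κ x ≤ M := by
  refine le_of_mul_le_mul_right ((h.cdfRightDeriv_mul_le hx.1).trans ?_) hx.1
  calc κ.real (Iic x) ≤ (M • lam).real (Iic x) := ENNReal.toReal_mono (measure_ne_top _ _) (hM _)
    _ = M * x := by
      rw [measureReal_nnreal_smul_apply, lam_real_Iic hx.1.le, min_eq_left hx.2]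

theorem exists_antitoneOn_density (h : HasConcaveCDF κ) {M : ℝ≥0} (hM : κ ≤ M • lam) :
    ∃ f : ℝ → ℝ, Integrable f lam ∧ (∀ x, 0 ≤ f x) ∧ AntitoneOn f (Icc 0 1) ∧
      lam.withDensity (fun x => ENNReal.ofReal (f x)) = κ := by
  have := h.finite
  set f := Function.update (cdfRightDeriv κ) 0 M
  have f_of_ne {x : ℝ} (hx : x ≠ 0) : f x = cdfRightDeriv κ x := Function.update_of_ne hx _ _
  have f_zero : f 0 = M := Function.update_self _ _ _
  have f_nonneg (x : ℝ) : 0 ≤ f x := by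
    rcases eq_or_ne x 0 with rfl | hx
    · exact f_zero ▸ M.coe_nonneg
    · exact f_of_ne hx ▸ cdfRightDeriv_nonneg κ x
  have f_ae_eq : f =ᵐ[lam] cdfRightDeriv κ := by
    filter_upwards [ae_lam_mem_Ioc] with x hx using f_of_ne hx.1.ne'
  have withDensity_f : lam.withDensity (fun x => ENNReal.ofReal (f x)) = κ :=
    (withDensity_congr_ae (f_ae_eq.fun_comp ENNReal.ofReal)).trans h.withDensity_cdfRightDeriv
  have lintegral_f : ∫⁻ x, ENNReal.ofReal (f x) ∂lam = κ univ := by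
    rw [← setLIntegral_univ, ← withDensity_apply _ .univ, withDensity_f]
  refine ⟨f, ⟨?_, ?_⟩, f_nonneg, fun x hx y hy hxy => ?_, withDensity_f⟩
  · exact (measurable_cdfRightDeriv κ).aestronglyMeasurable.congr f_ae_eq.symm
  · rw [hasFiniteIntegral_iff_ofReal (.of_forall f_nonneg), lintegral_f]
    exact measure_lt_top κ univ
  · rcases hxy.eq_or_lt with rfl | hxy
    · exact le_rfl
    have y_pos := hx.1.trans_lt hxy
    rw [f_of_ne y_pos.ne']
    rcases hx.1.eq_or_lt with rfl | x_pos
    · exact f_zero ▸ h.cdfRightDeriv_le hM ⟨y_pos, hy.2⟩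
    · exact f_of_ne x_pos.ne' ▸ h.antitoneOn_cdfRightDeriv x_pos y_pos hxy.le

end HasConcaveCDF

/-! ### Piecewise convex maps -/

open scoped Pointwise in
theorem concaveOn_sSup_sublevel {s D : Set ℝ} {f : ℝ → ℝ} (hf : ConvexOn ℝ s f) (hs : BddAbove s)
    (hD : Convex ℝ D) (hne : ∀ y ∈ D, {x ∈ s | f x ≤ y}.Nonempty) :
    ConcaveOn ℝ D fun y => sSup {x ∈ s | f x ≤ y} := by
  refine ⟨hD, fun y hy z hz p q hp hq hpq => ?_⟩
  have bdd (y : ℝ) : BddAbove {x ∈ s | f x ≤ y} := hs.mono fun _ hx => hx.1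
  simp only [smul_eq_mul]
  rw [← smul_eq_mul, ← smul_eq_mul, ← Real.sSup_smul_of_nonneg hp, ← Real.sSup_smul_of_nonneg hq,
    ← csSup_add ((hne y hy).smul_set) ((bdd y).smul_of_nonneg hp) ((hne z hz).smul_set)
      ((bdd z).smul_of_nonneg hq)]
  refine csSup_le_csSup (bdd _) ((hne y hy).smul_set.add (hne z hz).smul_set) ?_
  rintro _ ⟨_, ⟨u, hu, rfl⟩, _, ⟨v, hv, rfl⟩, rfl⟩
  refine ⟨hf.1 hu.1 hv.1 hp hq hpq, (hf.2 hu.1 hv.1 hp hq hpq).trans ?_⟩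
  exact add_le_add (mul_le_mul_of_nonneg_left hu.2 hp) (mul_le_mul_of_nonneg_left hv.2 hq)

theorem volume_inter_preimage_eq_zero {f : ℝ → ℝ} {s t : Set ℝ} {δ : ℝ} (hδ : 0 < δ)
    (hf : ∀ x ∈ s, ∀ y ∈ s, δ * dist x y ≤ dist (f x) (f y)) (ht : volume t = 0) :
    volume (s ∩ f ⁻¹' t) = 0 := by
  have inj : InjOn f s := fun x hx y hy hxy => by
    have := hf x hx y hy
    rw [hxy, dist_self] at this
    exact dist_le_zero.1 (nonpos_of_mul_nonpos_right this hδ)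
  have left_inv {x : ℝ} (hx : x ∈ s) : Function.invFunOn f s (f x) = x := inj.leftInvOn_invFunOn hx
  have lip : LipschitzOnWith (δ⁻¹).toNNReal (Function.invFunOn f s) (f '' s) := by
    refine .of_dist_le_mul ?_
    rintro _ ⟨x, hx, rfl⟩ _ ⟨y, hy, rfl⟩
    rw [left_inv hx, left_inv hy, Real.coe_toNNReal _ (inv_nonneg.2 hδ.le), inv_mul_eq_div,
      le_div_iff₀' hδ]
    exact hf x hx y hy
  have image_null : Measure.hausdorffMeasure 1 (Function.invFunOn f s '' (f '' s ∩ t)) = 0 := by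
    refine nonpos_iff_eq_zero.1
      (((lip.mono inter_subset_left).hausdorffMeasure_image_le zero_le_one).trans ?_)
    rw [hausdorffMeasure_real, measure_mono_null inter_subset_right ht, mul_zero]
  rw [hausdorffMeasure_real] at image_null
  refine measure_mono_null (fun x hx => ?_) image_null
  exact ⟨f x, ⟨mem_image_of_mem f hx.1, hx.2⟩, left_inv hx.1⟩

section AtomlessMeasures

variable {κ : Measure ℝ}

theorem ordConnected_ae_eq_Ioc_sSup [NullSingletonClass κ] {s : Set ℝ} (hs : s.OrdConnected)
    (hbdd : BddAbove s) {a : ℝ} (ha : IsLeast s a) : s =ᵐ[κ] Ioc a (sSup s) := by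
  have sub_Icc : s ⊆ Icc a (sSup s) := fun x hx => ⟨ha.2 hx, le_csSup hbdd hx⟩
  have Ioo_sub : Ioo a (sSup s) ⊆ s := fun x hx => by
    obtain ⟨z, hz, hxz⟩ := exists_lt_of_lt_csSup ⟨a, ha.1⟩ hx.2
    exact hs.out ha.1 hz ⟨hx.1.le, hxz.le⟩
  refine EventuallyLE.antisymm ?_ ?_
  · exact (LE.le.eventuallyLE sub_Icc).trans Ioc_ae_eq_Icc.symm.le
  · exact Ioo_ae_eq_Ioc.symm.le.trans (LE.le.eventuallyLE Ioo_sub)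

theorem measureReal_Ioc_eq_sub [IsFiniteMeasure κ] {a b : ℝ} (hab : a ≤ b) :
    κ.real (Ioc a b) = κ.real (Iic b) - κ.real (Iic a) := by
  rw [← Iic_sdiff_Iic, measureReal_sdiff (Iic_subset_Iic.2 hab) measurableSet_Iic]

end AtomlessMeasures

/-- The maps of `[0, 1]` whose restrictions to countably many disjoint intervals `[a i, c i)`
covering almost all of `[0, 1]` are convex and vanish at `a i`, with `[a i₀, c i₀)` the branch at
the origin. This generalizes `TpcInfty`: branches need not be differentiable, `d i` being any lower
bound for the slopes of chords issued from `a i`. -/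
structure PiecewiseConvex {ι : Type*} (T : ℝ → ℝ) (i₀ : ι) (a c d : ι → ℝ) : Prop where
  mapsTo : ∀ i, MapsTo T (Ico (a i) (c i)) (Icc 0 1)
  left_nonneg : ∀ i, 0 ≤ a i
  left_lt_right : ∀ i, a i < c i
  right_le_one : ∀ i, c i ≤ 1
  disjoint : Pairwise (Function.onFun Disjoint fun i => Ico (a i) (c i))
  ae_mem : ∀ᵐ x ∂lam, ∃ i, x ∈ Ico (a i) (c i)
  convexOn : ∀ i, ConvexOn ℝ (Ico (a i) (c i)) T
  map_left : ∀ i, T (a i) = 0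
  slope_pos : ∀ i, 0 < d i
  mul_sub_left_le : ∀ i, ∀ x ∈ Ico (a i) (c i), d i * (x - a i) ≤ T x
  summable_inv : Summable fun i => 1 / d i
  left_zero : a i₀ = 0
  one_lt_slope : 1 < d i₀

/-- The generalized inverse of the `i`-th branch of `T`: the right end of its sublevel set. -/
noncomputable def branchInv {ι : Type*} (T : ℝ → ℝ) (a c : ι → ℝ) (i : ι) (y : ℝ) : ℝ :=
  sSup {x ∈ Ico (a i) (c i) | T x ≤ y}

namespace PiecewiseConvex

variable {ι : Type*} {T : ℝ → ℝ} {i₀ : ι} {a c d : ι → ℝ} {i : ι} {x y : ℝ}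

theorem congr (h : PiecewiseConvex T i₀ a c d) {T' : ℝ → ℝ}
    (hTT' : ∀ i, EqOn T T' (Ico (a i) (c i))) : PiecewiseConvex T' i₀ a c d where
  __ := h
  mapsTo i := (h.mapsTo i).congr (hTT' i)
  convexOn i := (h.convexOn i).congr (hTT' i)
  map_left i := hTT' i (left_mem_Ico.2 (h.left_lt_right i)) ▸ h.map_left i
  mul_sub_left_le i x hx := hTT' i hx ▸ h.mul_sub_left_le i x hx

theorem left_mem (h : PiecewiseConvex T i₀ a c d) (i : ι) : a i ∈ Ico (a i) (c i) :=
  left_mem_Ico.2 (h.left_lt_right i)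

theorem right_le_left (h : PiecewiseConvex T i₀ a c d) (hi : i ≠ i₀) : c i₀ ≤ a i := by
  by_contra! hlt
  exact disjoint_left.1 (h.disjoint hi) (h.left_mem i) ⟨h.left_zero ▸ h.left_nonneg i, hlt⟩

theorem right_pos (h : PiecewiseConvex T i₀ a c d) : 0 < c i₀ :=
  h.left_zero ▸ h.left_lt_right i₀

theorem sub_mul_map_le (h : PiecewiseConvex T i₀ a c d) (hx : x ∈ Ico (a i) (c i))
    (hy : y ∈ Ico (a i) (c i)) (hxy : x ≤ y) : (y - x) * T x ≤ (x - a i) * (T y - T x) := by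
  rcases hx.1.eq_or_lt with rfl | hax
  · simp [h.map_left]
  rcases hxy.eq_or_lt with rfl | hxy
  · simp
  have slopes := (h.convexOn i).slope_mono_adjacent (h.left_mem i) hy hax hxy
  rw [h.map_left, sub_zero, div_le_div_iff₀ (sub_pos.2 hax) (sub_pos.2 hxy)] at slopes
  linarith

theorem mul_sub_le (h : PiecewiseConvex T i₀ a c d) (hx : x ∈ Ico (a i) (c i))
    (hy : y ∈ Ico (a i) (c i)) (hxy : x ≤ y) : d i * (y - x) ≤ T y - T x := by
  rcases hx.1.eq_or_lt with rfl | hax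
  · simpa [h.map_left] using h.mul_sub_left_le i y hy
  refine le_of_mul_le_mul_left ?_ (sub_pos.2 hax)
  calc (x - a i) * (d i * (y - x)) = (y - x) * (d i * (x - a i)) := by ring
    _ ≤ (y - x) * T x :=
        mul_le_mul_of_nonneg_left (h.mul_sub_left_le i x hx) (sub_nonneg.2 hxy)
    _ ≤ (x - a i) * (T y - T x) := h.sub_mul_map_le hx hy hxy

theorem monotoneOn (h : PiecewiseConvex T i₀ a c d) (i : ι) : MonotoneOn T (Ico (a i) (c i)) :=
  fun _ hx _ hy hxy => sub_nonneg.1 <|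
    (mul_nonneg (h.slope_pos i).le (sub_nonneg.2 hxy)).trans (h.mul_sub_le hx hy hxy)

theorem mul_dist_le (h : PiecewiseConvex T i₀ a c d) (hx : x ∈ Ico (a i) (c i))
    (hy : y ∈ Ico (a i) (c i)) : d i * dist x y ≤ dist (T x) (T y) := by
  wlog hxy : x ≤ y generalizing x y
  · simpa only [dist_comm] using this hy hx (le_of_not_ge hxy)
  rw [dist_comm x, dist_comm (T x), Real.dist_eq, Real.dist_eq, abs_of_nonneg (sub_nonneg.2 hxy)]
  exact (h.mul_sub_le hx hy hxy).trans (le_abs_self _)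

theorem isLeast_sublevel (h : PiecewiseConvex T i₀ a c d) (i : ι) (hy : 0 ≤ y) :
    IsLeast {x ∈ Ico (a i) (c i) | T x ≤ y} (a i) :=
  ⟨⟨h.left_mem i, (h.map_left i).trans_le hy⟩, fun _ hx => hx.1.1⟩

theorem ordConnected_sublevel (h : PiecewiseConvex T i₀ a c d) (i : ι) (y : ℝ) :
    {x ∈ Ico (a i) (c i) | T x ≤ y}.OrdConnected :=
  ((h.convexOn i).convex_le y).ordConnected

theorem bddAbove_sublevel (T : ℝ → ℝ) (a c : ι → ℝ) (i : ι) (y : ℝ) :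
    BddAbove {x ∈ Ico (a i) (c i) | T x ≤ y} :=
  bddAbove_Ico.mono fun _ hx => hx.1

theorem left_le_branchInv (h : PiecewiseConvex T i₀ a c d) (i : ι) (hy : 0 ≤ y) :
    a i ≤ branchInv T a c i y :=
  le_csSup (bddAbove_sublevel T a c i y) (h.isLeast_sublevel i hy).1

theorem concaveOn_branchInv (h : PiecewiseConvex T i₀ a c d) (i : ι) :
    ConcaveOn ℝ (Ici 0) (branchInv T a c i) :=
  concaveOn_sSup_sublevel (h.convexOn i) bddAbove_Ico (convex_Ici 0) fun _ hy =>
    (h.isLeast_sublevel i hy).nonempty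

theorem map_restrict_real_Iic (h : PiecewiseConvex T i₀ a c d) (hT : Measurable T) {κ : Measure ℝ}
    [IsFiniteMeasure κ] (hκ : κ ≪ lam) (i : ι) (hy : 0 ≤ y) :
    ((κ.restrict (Ico (a i) (c i))).map T).real (Iic y) =
      κ.real (Iic (branchInv T a c i y)) - κ.real (Iic (a i)) := by
  have := nullSingletonClass_of_absolutelyContinuous hκ
  have preimage_eq : T ⁻¹' Iic y ∩ Ico (a i) (c i) = {x ∈ Ico (a i) (c i) | T x ≤ y} := by
    ext x; exact and_comm
  rw [map_measureReal_apply hT measurableSet_Iic,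
    measureReal_restrict_apply (hT measurableSet_Iic), preimage_eq,
    measureReal_congr (ordConnected_ae_eq_Ioc_sSup (h.ordConnected_sublevel i y)
      (bddAbove_sublevel T a c i y) (h.isLeast_sublevel i hy))]
  exact measureReal_Ioc_eq_sub (h.left_le_branchInv i hy)

theorem exists_measurable_eqOn [Countable ι] (h : PiecewiseConvex T i₀ a c d) :
    ∃ T' : ℝ → ℝ, Measurable T' ∧ ∀ i, EqOn T T' (Ico (a i) (c i)) := by
  have branch_extends (i : ι) : ∃ g : ℝ → ℝ, Measurable g ∧ EqOn T g (Ico (a i) (c i)) := by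
    have restrict_measurable : Measurable ((Ico (a i) (c i)).domRestrict T) :=
      (monotoneOn_iff_monotone.1 (h.monotoneOn i)).measurable
    obtain ⟨g, hg, hgT⟩ :=
      (MeasurableEmbedding.subtype_coe measurableSet_Ico).exists_measurable_extend
        restrict_measurable fun _ => inferInstance
    exact ⟨g, hg, fun x hx => (congrFun hgT ⟨x, hx⟩).symm⟩
  choose g g_measurable g_eqOn using branch_extends
  have : Nonempty ι := ⟨i₀⟩
  obtain ⟨T', hT', hT'g⟩ := exists_measurable_piecewise (fun i => Ico (a i) (c i))
    (fun _ => measurableSet_Ico) g g_measurable fun i j hij x hx =>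
      (disjoint_left.1 (h.disjoint hij) hx.1 hx.2).elim
  exact ⟨T', hT', fun i => (g_eqOn i).trans (hT'g i).symm⟩

section Measurable

variable [Countable ι]

theorem quasiMeasurePreserving (h : PiecewiseConvex T i₀ a c d) (hT : Measurable T) :
    Measure.QuasiMeasurePreserving T lam lam := by
  refine ⟨hT, Measure.AbsolutelyContinuous.mk fun s hs hs0 => ?_⟩
  rw [Measure.map_apply hT hs]
  have null_branch (i : ι) : lam (Ico (a i) (c i) ∩ T ⁻¹' (s ∩ Icc 0 1)) = 0 := by
    refine Measure.restrict_le_self.absolutelyContinuous (volume_inter_preimage_eq_zero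
      (h.slope_pos i) (fun x hx y hy => h.mul_dist_le hx hy) ?_)
    rwa [lam, Measure.restrict_apply hs] at hs0
  rw [measure_eq_zero_iff_ae_notMem]
  filter_upwards [h.ae_mem, measure_eq_zero_iff_ae_notMem.1 (measure_iUnion_null null_branch)]
    with x ⟨i, hi⟩ hx hxs
  exact hx (mem_iUnion.2 ⟨i, hi, hxs, h.mapsTo i hi⟩)

theorem map_eq_sum (h : PiecewiseConvex T i₀ a c d) (hT : Measurable T) {κ : Measure ℝ}
    (hκ : κ ≪ lam) : κ.map T = Measure.sum fun i => (κ.restrict (Ico (a i) (c i))).map T := by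
  rw [← Measure.map_sum hT.aemeasurable,
    ← Measure.restrict_iUnion h.disjoint fun _ => measurableSet_Ico,
    Measure.restrict_eq_self_of_ae_mem]
  filter_upwards [hκ.ae_le h.ae_mem] with x hx using mem_iUnion.2 hx

theorem hasConcaveCDF_map_restrict (h : PiecewiseConvex T i₀ a c d) (hT : Measurable T)
    {κ : Measure ℝ} (hκ : HasConcaveCDF κ) (i : ι) :
    HasConcaveCDF ((κ.restrict (Ico (a i) (c i))).map T) := by
  have := hκ.finite
  refine ⟨inferInstance, ((Measure.restrict_le_self.absolutelyContinuous.trans hκ.ac).map hT).trans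
    (h.quasiMeasurePreserving hT).absolutelyContinuous, ?_⟩
  refine ⟨convex_Ici 0, fun y hy z hz p q hp hq hpq => ?_⟩
  have branchInv_nonneg {y : ℝ} (hy : 0 ≤ y) : 0 ≤ branchInv T a c i y :=
    (h.left_nonneg i).trans (h.left_le_branchInv i hy)
  have cdf_concave := hκ.concaveOn.2 (branchInv_nonneg hy) (branchInv_nonneg hz) hp hq hpq
  have cdf_mono : κ.real (Iic (p • branchInv T a c i y + q • branchInv T a c i z)) ≤
      κ.real (Iic (branchInv T a c i (p • y + q • z))) :=
    measureReal_mono (Iic_subset_Iic.2 ((h.concaveOn_branchInv i).2 hy hz hp hq hpq))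
  simp only [h.map_restrict_real_Iic hT hκ.ac i hy, h.map_restrict_real_Iic hT hκ.ac i hz,
    h.map_restrict_real_Iic hT hκ.ac i (convex_Ici (0 : ℝ) hy hz hp hq hpq)]
  calc p • (κ.real (Iic (branchInv T a c i y)) - κ.real (Iic (a i))) +
        q • (κ.real (Iic (branchInv T a c i z)) - κ.real (Iic (a i)))
      = p • κ.real (Iic (branchInv T a c i y)) + q • κ.real (Iic (branchInv T a c i z)) -
          κ.real (Iic (a i)) := by
        simp only [smul_eq_mul]; linear_combination (-κ.real (Iic (a i))) * hpq
    _ ≤ _ := sub_le_sub_right (cdf_concave.trans cdf_mono) _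

theorem hasConcaveCDF_map (h : PiecewiseConvex T i₀ a c d) (hT : Measurable T) {κ : Measure ℝ}
    (hκ : HasConcaveCDF κ) : HasConcaveCDF (κ.map T) := by
  have := hκ.finite
  have finite_map : IsFiniteMeasure (κ.map T) := inferInstance
  rw [h.map_eq_sum hT hκ.ac] at finite_map ⊢
  exact .sum fun i => h.hasConcaveCDF_map_restrict hT hκ i

end Measurable

section UniformBound

variable {κ : Measure ℝ}

theorem sublevel_subset_Icc (h : PiecewiseConvex T i₀ a c d) (i : ι) (y : ℝ) :
    T ⁻¹' Iic y ∩ Ico (a i) (c i) ⊆ Icc (a i) (a i + y / d i) := by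
  refine fun x ⟨hxy, hx⟩ => ⟨hx.1, ?_⟩
  rw [← sub_le_iff_le_add', le_div_iff₀' (h.slope_pos i)]
  exact (h.mul_sub_left_le i x hx).trans hxy

theorem map_restrict_real_Iic_le (h : PiecewiseConvex T i₀ a c d) (hT : Measurable T)
    {i : ι} {K : ℝ} (hK : 0 ≤ K) (hκ : κ.restrict (Ico (a i) (c i)) ≤ ENNReal.ofReal K • lam)
    {y : ℝ} (hy : 0 ≤ y) :
    ((κ.restrict (Ico (a i) (c i))).map T).real (Iic y) ≤ K * (y / d i) := by
  have hT_Iic : MeasurableSet (T ⁻¹' Iic y) := hT measurableSet_Iic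
  refine ENNReal.toReal_le_of_le_ofReal (mul_nonneg hK (div_nonneg hy (h.slope_pos i).le)) ?_
  calc (κ.restrict (Ico (a i) (c i))).map T (Iic y)
      = κ.restrict (Ico (a i) (c i)) (T ⁻¹' Iic y ∩ Ico (a i) (c i)) := by
        rw [Measure.map_apply hT measurableSet_Iic, Measure.restrict_apply hT_Iic,
          Measure.restrict_apply (hT_Iic.inter measurableSet_Ico), inter_assoc, inter_self]
    _ ≤ κ.restrict (Ico (a i) (c i)) (Icc (a i) (a i + y / d i)) :=
        measure_mono (h.sublevel_subset_Icc i y)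
    _ ≤ ENNReal.ofReal K * lam (Icc (a i) (a i + y / d i)) := hκ _
    _ ≤ ENNReal.ofReal K * volume (Icc (a i) (a i + y / d i)) := by
        gcongr; exact Measure.restrict_le_self
    _ = ENNReal.ofReal (K * (y / d i)) := by
        rw [Real.volume_Icc, add_sub_cancel_left, ENNReal.ofReal_mul hK]

theorem restrict_branch_le (h : PiecewiseConvex T i₀ a c d) [IsProbabilityMeasure κ]
    (hκ : HasConcaveCDF κ) {i : ι} (hi : i ≠ i₀) :
    κ.restrict (Ico (a i) (c i)) ≤ ENNReal.ofReal (1 / c i₀) • lam := by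
  refine hκ.restrict_le_smul_lam measurableSet_Ico fun t ht _ => measureReal_le_one.trans ?_
  rw [one_div_mul_eq_div, one_le_div h.right_pos]
  exact (h.right_le_left hi).trans ht.1

variable [Countable ι]

theorem map_le_smul_lam (h : PiecewiseConvex T i₀ a c d) (hT : Measurable T)
    [IsProbabilityMeasure κ] (hκ : HasConcaveCDF κ) {M : ℝ} (hM : 0 ≤ M)
    (hκM : κ ≤ ENNReal.ofReal M • lam) :
    κ.map T ≤ ENNReal.ofReal (M / d i₀ + (∑' i, 1 / d i) / c i₀) • lam := by
  classical
  have branch_le (i : ι) {y : ℝ} (hy : 0 ≤ y) :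
      ((κ.restrict (Ico (a i) (c i))).map T).real (Iic y) ≤
        (if i = i₀ then M / d i₀ * y else 0) + 1 / d i * (y / c i₀) := by
    rcases eq_or_ne i i₀ with rfl | hi
    · rw [if_pos rfl]
      refine (h.map_restrict_real_Iic_le hT hM (Measure.restrict_le_self.trans hκM) hy).trans ?_
      have := mul_nonneg (one_div_nonneg.2 (h.slope_pos i).le) (div_nonneg hy h.right_pos.le)
      rw [div_mul_eq_mul_div, mul_div_assoc]
      linarith
    · rw [if_neg hi, zero_add]
      refine (h.map_restrict_real_Iic_le hT (one_div_nonneg.2 h.right_pos.le)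
        (h.restrict_branch_le hκ hi) hy).trans_eq ?_
      ring
  rw [← Measure.restrict_univ (μ := κ.map T)]
  refine (h.hasConcaveCDF_map hT hκ).restrict_le_smul_lam MeasurableSet.univ fun y _ hy => ?_
  have : IsProbabilityMeasure (κ.map T) := Measure.isProbabilityMeasure_map hT.aemeasurable
  have branches := h.map_eq_sum hT hκ.ac
  have : IsFiniteMeasure (Measure.sum fun i => (κ.restrict (Ico (a i) (c i))).map T) :=
    branches ▸ inferInstance
  rw [branches]
  refine (hasSum_le (branch_le · hy.le) (hasSum_measureReal_sum measurableSet_Iic)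
    ((hasSum_ite_eq i₀ _).add (h.summable_inv.hasSum.mul_right _))).trans_eq ?_
  ring

theorem exists_forall_map_iterate_le (h : PiecewiseConvex T i₀ a c d) (hT : Measurable T) :
    ∃ M : ℝ≥0, ∀ n, lam.map T^[n] ≤ M • lam := by
  set r := (∑' i, 1 / d i) / c i₀
  have r_nonneg : 0 ≤ r :=
    div_nonneg (tsum_nonneg fun i => one_div_nonneg.2 (h.slope_pos i).le) h.right_pos.le
  obtain ⟨M, one_le_M, hM⟩ : ∃ M, 1 ≤ M ∧ M / d i₀ + r ≤ M := by
    have d_pos := h.slope_pos i₀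
    have hd := sub_pos.2 h.one_lt_slope
    refine ⟨1 + r * d i₀ / (d i₀ - 1), le_add_of_nonneg_right (by positivity), ?_⟩
    rw [← le_sub_iff_add_le', ← sub_nonneg]
    have : 1 + r * d i₀ / (d i₀ - 1) - (1 + r * d i₀ / (d i₀ - 1)) / d i₀ - r =
      (d i₀ - 1) / d i₀ := by field_simp; ring
    rw [this]
    positivity
  have hasConcaveCDF_and_le (n : ℕ) :
      HasConcaveCDF (lam.map T^[n]) ∧ lam.map T^[n] ≤ ENNReal.ofReal M • lam := by
    induction n with
    | zero =>
      rw [Function.iterate_zero, Measure.map_id]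
      exact ⟨hasConcaveCDF_lam, Measure.le_iff'.2 fun s =>
        le_mul_of_one_le_left' (ENNReal.one_le_ofReal.2 one_le_M)⟩
    | succ n ih =>
      have : IsProbabilityMeasure (lam.map T^[n]) :=
        Measure.isProbabilityMeasure_map (hT.iterate n).aemeasurable
      rw [Function.iterate_succ', ← Measure.map_map hT (hT.iterate n)]
      exact ⟨h.hasConcaveCDF_map hT ih.1, (h.map_le_smul_lam hT ih.1 (by linarith) ih.2).trans
        (by gcongr)⟩
  exact ⟨M.toNNReal, fun n => (hasConcaveCDF_and_le n).2⟩

theorem exists_measurePreserving (h : PiecewiseConvex T i₀ a c d) (hT : Measurable T) :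
    ∃ (M : ℝ≥0) (μ : Measure ℝ), μ ≤ M • lam ∧ IsProbabilityMeasure μ ∧
      MeasurePreserving T μ μ := by
  obtain ⟨M, hM⟩ := h.exists_forall_map_iterate_le hT
  exact ⟨M, exists_measurePreserving_le hT hM⟩

end UniformBound

end PiecewiseConvex

/-! ### Itineraries and generating partitions -/

section Itinerary

variable {α ι : Type*}

/-- The first `n` symbols of the coding of the `T`-orbit of `x` by the labels `φ`. -/
def itinerary (T : α → α) (φ : α → ι) (n : ℕ) (x : α) : Fin n → ι :=
  fun k => φ (T^[k] x)

theorem preimage_itinerary_succ (T : α → α) (φ : α → ι) {n : ℕ} (s : Fin (n + 1) → ι) :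
    itinerary T φ (n + 1) ⁻¹' {s} =
      T ⁻¹' (itinerary T φ n ⁻¹' {Fin.tail s}) ∩ φ ⁻¹' {s 0} := by
  ext x
  simp only [itinerary, mem_preimage, mem_singleton_iff, mem_inter_iff, funext_iff,
    Fin.forall_fin_succ, Fin.tail, Fin.val_zero, Fin.val_succ, Function.iterate_zero_apply,
    Function.iterate_succ_apply]
  exact and_comm

theorem measurable_itinerary [MeasurableSpace α] [MeasurableSpace ι] {T : α → α} {φ : α → ι}
    (hT : Measurable T) (hφ : Measurable φ) (n : ℕ) : Measurable (itinerary T φ n) :=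
  measurable_pi_lambda _ fun k => hφ.comp (hT.iterate k)

end Itinerary

open Classical in
/-- The index of the interval `[a i, c i)` containing `x`, and `i₀` when there is none. -/
noncomputable def branchIndex {ι : Type*} (i₀ : ι) (a c : ι → ℝ) (x : ℝ) : ι :=
  if h : ∃ i, x ∈ Ico (a i) (c i) then h.choose else i₀

namespace PiecewiseConvex

variable {ι : Type*} {T : ℝ → ℝ} {i₀ : ι} {a c d : ι → ℝ} {κ : Measure ℝ}

theorem branchIndex_eq (h : PiecewiseConvex T i₀ a c d) {i : ι} {x : ℝ} (hx : x ∈ Ico (a i) (c i)) :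
    branchIndex i₀ a c x = i := by
  have mem_branch : ∃ i, x ∈ Ico (a i) (c i) := ⟨i, hx⟩
  rw [branchIndex, dif_pos mem_branch]
  by_contra hne
  exact disjoint_left.1 (h.disjoint hne) mem_branch.choose_spec hx

theorem mem_branch_branchIndex (h : PiecewiseConvex T i₀ a c d) {x : ℝ}
    (hx : ∃ i, x ∈ Ico (a i) (c i)) :
    x ∈ Ico (a (branchIndex i₀ a c x)) (c (branchIndex i₀ a c x)) := by
  obtain ⟨i, hi⟩ := hx
  rwa [h.branchIndex_eq hi]

theorem preimage_branchIndex_ae_eq (h : PiecewiseConvex T i₀ a c d) (hκ : κ ≪ lam) (i : ι) :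
    (branchIndex i₀ a c ⁻¹' {i} : Set ℝ) =ᵐ[κ] Ico (a i) (c i) := by
  filter_upwards [hκ.ae_le h.ae_mem] with x hx
  refine propext ⟨fun hxi => ?_, h.branchIndex_eq⟩
  rw [← (hxi : branchIndex i₀ a c x = i)]
  exact h.mem_branch_branchIndex hx

variable [Countable ι] [MeasurableSpace ι]

theorem measurable_branchIndex (h : PiecewiseConvex T i₀ a c d) :
    Measurable (branchIndex i₀ a c) := by
  refine measurable_to_countable' fun i => ?_
  have preimage_eq : branchIndex i₀ a c ⁻¹' {i} =
      Ico (a i) (c i) ∪ ((⋃ j, Ico (a j) (c j))ᶜ ∩ {_x | i₀ = i}) := by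
    ext x
    rw [mem_preimage, mem_singleton_iff, mem_union, mem_inter_iff, mem_compl_iff, mem_iUnion]
    by_cases hx : ∃ j, x ∈ Ico (a j) (c j)
    · exact ⟨fun hxi => .inl (hxi ▸ h.mem_branch_branchIndex hx),
        fun hxi => hxi.elim h.branchIndex_eq fun hx' => (hx'.1 hx).elim⟩
    · rw [branchIndex, dif_neg hx]
      exact ⟨fun hi => .inr ⟨hx, hi⟩, fun hxi => hxi.elim (fun hi => (hx ⟨i, hi⟩).elim) And.right⟩
  rw [preimage_eq]
  exact measurableSet_Ico.union
    ((MeasurableSet.iUnion fun _ => measurableSet_Ico).compl.inter (.const _))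

variable [MeasurableSingletonClass ι]

theorem hasConcaveCDF_map_restrict_itinerary
    (h : PiecewiseConvex T i₀ a c d) (hT : Measurable T) (n : ℕ) (s : Fin n → ι)
    (hκ : HasConcaveCDF κ) :
    HasConcaveCDF ((κ.restrict (itinerary T (branchIndex i₀ a c) n ⁻¹' {s})).map T^[n]) := by
  induction n generalizing κ with
  | zero =>
    have : itinerary T (branchIndex i₀ a c) 0 ⁻¹' {s} = univ :=
      eq_univ_of_forall fun x => Subsingleton.elim _ _
    rwa [this, Measure.restrict_univ, Function.iterate_zero, Measure.map_id]
  | succ n ih =>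
    have cylinder_measurable :
        MeasurableSet (itinerary T (branchIndex i₀ a c) n ⁻¹' {Fin.tail s}) :=
      measurable_itinerary hT h.measurable_branchIndex n (measurableSet_singleton _)
    rw [preimage_itinerary_succ, ← Measure.restrict_restrict (hT cylinder_measurable),
      Measure.restrict_congr_set (h.preimage_branchIndex_ae_eq hκ.ac (s 0)), Function.iterate_succ,
      ← Measure.map_map (hT.iterate n) hT, ← Measure.restrict_map hT cylinder_measurable]
    exact ih _ (h.hasConcaveCDF_map_restrict hT hκ (s 0))

theorem hasConcaveCDF_map_withDensity_itinerary
    (h : PiecewiseConvex T i₀ a c d) (hT : Measurable T) {n : ℕ} (q : (Fin n → ι) → ℝ≥0)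
    [IsFiniteMeasure (lam.withDensity fun x => q (itinerary T (branchIndex i₀ a c) n x))] :
    HasConcaveCDF
      ((lam.withDensity fun x => q (itinerary T (branchIndex i₀ a c) n x)).map T^[n]) := by
  have finite_map : IsFiniteMeasure
      ((lam.withDensity fun x => q (itinerary T (branchIndex i₀ a c) n x)).map T^[n]) :=
    inferInstance
  rw [withDensity_comp_eq_sum (measurable_itinerary hT h.measurable_branchIndex n) fun s => q s,
    Measure.map_sum (hT.iterate n).aemeasurable] at finite_map ⊢
  refine .sum fun s => ?_
  rw [Measure.map_smul]
  exact (h.hasConcaveCDF_map_restrict_itinerary hT n s hasConcaveCDF_lam).smul ENNReal.coe_ne_top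

end PiecewiseConvex

/-- The points whose `T`-orbit stays in the union of the branches and never hits `0`. -/
def regularSet {ι : Type*} (T : ℝ → ℝ) (a c : ι → ℝ) : Set ℝ :=
  {x | ∀ n, 0 < T^[n] x ∧ ∃ i, T^[n] x ∈ Ico (a i) (c i)}

namespace PiecewiseConvex

variable {ι : Type*} {T : ℝ → ℝ} {i₀ : ι} {a c d : ι → ℝ} {x y : ℝ}

theorem ae_mem_regularSet [Countable ι] (h : PiecewiseConvex T i₀ a c d) (hT : Measurable T) :
    ∀ᵐ x ∂lam, x ∈ regularSet T a c := by
  have ae_pos_and_mem : ∀ᵐ x ∂lam, 0 < x ∧ ∃ i, x ∈ Ico (a i) (c i) :=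
    (ae_lam_mem_Ioc.mono fun x hx => hx.1).and h.ae_mem
  exact ae_all_iff.2 fun n => ((h.quasiMeasurePreserving hT).iterate n).ae ae_pos_and_mem

theorem iterate_mem_branch (h : PiecewiseConvex T i₀ a c d) (hx : x ∈ regularSet T a c) (n : ℕ) :
    T^[n] x ∈ Ico (a (branchIndex i₀ a c (T^[n] x))) (c (branchIndex i₀ a c (T^[n] x))) :=
  h.mem_branch_branchIndex (hx n).2

theorem iterate_lt_one (h : PiecewiseConvex T i₀ a c d) (hx : x ∈ regularSet T a c) (n : ℕ) :
    T^[n] x < 1 :=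
  (h.iterate_mem_branch hx n).2.trans_le (h.right_le_one _)

theorem frequently_branchIndex_ne (h : PiecewiseConvex T i₀ a c d) (hx : x ∈ regularSet T a c) :
    ∃ᶠ n in atTop, branchIndex i₀ a c (T^[n] x) ≠ i₀ := by
  intro eventually_eq
  obtain ⟨N, hN⟩ := eventually_atTop.1 eventually_eq
  have pow_mul_le (k : ℕ) : d i₀ ^ k * T^[N] x ≤ T^[N + k] x := by
    induction k with
    | zero => simp
    | succ k ih =>
      have mem_branch := h.iterate_mem_branch hx (N + k)
      rw [not_not.1 (hN (N + k) (Nat.le_add_right N k))] at mem_branch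
      have expansion := h.mul_sub_left_le i₀ _ mem_branch
      rw [h.left_zero, sub_zero] at expansion
      rw [← add_assoc, Function.iterate_succ_apply', pow_succ', mul_assoc]
      exact (mul_le_mul_of_nonneg_left ih (h.slope_pos i₀).le).trans expansion
  obtain ⟨k, hk⟩ := pow_unbounded_of_one_lt (1 / T^[N] x) h.one_lt_slope
  rw [div_lt_iff₀ (hx N).1] at hk
  exact (hk.trans_le (pow_mul_le k)).not_gt (h.iterate_lt_one hx _)

theorem sub_mul_map_le_mul (h : PiecewiseConvex T i₀ a c d) {i : ι} (hx : x ∈ Ico (a i) (c i))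
    (hy : y ∈ Ico (a i) (c i)) (hxy : x ≤ y) :
    (y - x) * T x ≤ (1 - a i) * x * (T y - T x) := by
  refine (h.sub_mul_map_le hx hy hxy).trans (mul_le_mul_of_nonneg_right ?_ ?_)
  · have := mul_le_of_le_one_right (h.left_nonneg i) (hx.2.le.trans (h.right_le_one i))
    linarith
  · exact sub_nonneg.2 (h.monotoneOn i hx hy hxy)

theorem prod_one_sub_left_nonneg (h : PiecewiseConvex T i₀ a c d) (s : ℕ → ι) (n : ℕ) :
    0 ≤ ∏ k ∈ Finset.range n, (1 - a (s k)) :=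
  Finset.prod_nonneg fun _ _ => sub_nonneg.2 ((h.left_lt_right _).le.trans (h.right_le_one _))

-- Iterating `sub_mul_map_le_mul`: the relative distance of two points sharing a branch grows
-- at least by the factor `1 / (1 - a i)`.
theorem sub_mul_iterate_le (h : PiecewiseConvex T i₀ a c d) (hx : x ∈ regularSet T a c)
    (hxy : x ≤ y) {s : ℕ → ι} (n : ℕ) (hxs : ∀ k < n, T^[k] x ∈ Ico (a (s k)) (c (s k)))
    (hys : ∀ k < n, T^[k] y ∈ Ico (a (s k)) (c (s k))) :
    T^[n] x ≤ T^[n] y ∧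
      (y - x) * T^[n] x ≤ (∏ k ∈ Finset.range n, (1 - a (s k))) * x * (T^[n] y - T^[n] x) := by
  induction n with
  | zero => exact ⟨hxy, by simp [mul_comm]⟩
  | succ n ih =>
    obtain ⟨iterate_le, bound⟩ := ih (fun k hk => hxs k (hk.trans n.lt_succ_self))
      fun k hk => hys k (hk.trans n.lt_succ_self)
    have hxn := hxs n n.lt_succ_self
    have hyn := hys n n.lt_succ_self
    have step := h.sub_mul_map_le_mul hxn hyn iterate_le
    simp only [Function.iterate_succ_apply', Finset.prod_range_succ]
    set u := T^[n] x
    set v := T^[n] y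
    set p := ∏ k ∈ Finset.range n, (1 - a (s k))
    have u_pos : 0 < u := (hx n).1
    have Tu_nonneg : 0 ≤ T u := (h.mapsTo _ hxn).1
    have x_pos : 0 < x := (hx 0).1
    have p_nonneg : 0 ≤ p := h.prod_one_sub_left_nonneg s n
    refine ⟨h.monotoneOn _ hxn hyn iterate_le, le_of_mul_le_mul_left ?_ u_pos⟩
    calc u * ((y - x) * T u) = (y - x) * u * T u := by ring
      _ ≤ p * x * (v - u) * T u := mul_le_mul_of_nonneg_right bound Tu_nonneg
      _ = p * x * ((v - u) * T u) := by ring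
      _ ≤ p * x * ((1 - a (s n)) * u * (T v - T u)) :=
          mul_le_mul_of_nonneg_left step (by positivity)
      _ = u * (p * (1 - a (s n)) * x * (T v - T u)) := by ring

theorem mul_dist_le_prod (h : PiecewiseConvex T i₀ a c d) {s : ℕ → ι} {n : ℕ} (hn : s n ≠ i₀)
    (hx : x ∈ regularSet T a c) (hy : y ∈ regularSet T a c)
    (hxs : ∀ k ≤ n, T^[k] x ∈ Ico (a (s k)) (c (s k)))
    (hys : ∀ k ≤ n, T^[k] y ∈ Ico (a (s k)) (c (s k))) :
    c i₀ * dist x y ≤ ∏ k ∈ Finset.range n, (1 - a (s k)) := by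
  wlog hxy : x ≤ y generalizing x y
  · rw [dist_comm]
    exact this hy hx hys hxs (le_of_not_ge hxy)
  rw [dist_comm, Real.dist_eq, abs_of_nonneg (sub_nonneg.2 hxy), mul_comm]
  obtain ⟨iterate_le, bound⟩ :=
    h.sub_mul_iterate_le hx hxy n (fun k hk => hxs k hk.le) fun k hk => hys k hk.le
  calc (y - x) * c i₀ ≤ (y - x) * T^[n] x :=
        mul_le_mul_of_nonneg_left ((h.right_le_left hn).trans (hxs n le_rfl).1) (sub_nonneg.2 hxy)
    _ ≤ _ := bound
    _ ≤ ∏ k ∈ Finset.range n, (1 - a (s k)) := by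
      rw [mul_assoc]
      refine mul_le_of_le_one_right (h.prod_one_sub_left_nonneg s n)
        (mul_le_one₀ (h.iterate_lt_one hx 0).le (sub_nonneg.2 iterate_le) ?_)
      linarith [(hx n).1, h.iterate_lt_one hy n]

-- The consecutive differences `p n * a (s n)` of the decreasing products `p n` tend to `0`,
-- while `a (s n) ≥ c i₀` whenever `s n ≠ i₀`.
theorem exists_prod_lt (h : PiecewiseConvex T i₀ a c d) {s : ℕ → ι} (hs : ∃ᶠ n in atTop, s n ≠ i₀)
    {ε : ℝ} (hε : 0 < ε) : ∃ n, s n ≠ i₀ ∧ ∏ k ∈ Finset.range n, (1 - a (s k)) < ε := by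
  set p := fun n => ∏ k ∈ Finset.range n, (1 - a (s k)) with hp
  have p_nonneg : ∀ n, 0 ≤ p n := h.prod_one_sub_left_nonneg s
  have p_sub (n : ℕ) : p n - p (n + 1) = p n * a (s n) := by
    simp only [hp, Finset.prod_range_succ]; ring
  have p_antitone : Antitone p := antitone_nat_of_succ_le fun n =>
    sub_nonneg.1 (p_sub n ▸ mul_nonneg (p_nonneg n) (h.left_nonneg _))
  have p_tendsto := tendsto_atTop_ciInf p_antitone ⟨0, forall_mem_range.2 p_nonneg⟩
  have sub_tendsto := p_tendsto.sub (p_tendsto.comp (tendsto_add_atTop_nat 1))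
  rw [sub_self] at sub_tendsto
  obtain ⟨n, hn, hlt⟩ :=
    (hs.and_eventually (sub_tendsto.eventually_lt_const (mul_pos hε h.right_pos))).exists
  refine ⟨n, hn, lt_of_mul_lt_mul_right ?_ h.right_pos.le⟩
  calc p n * c i₀ ≤ p n * a (s n) := mul_le_mul_of_nonneg_left (h.right_le_left hn) (p_nonneg n)
    _ = p n - p (n + 1) := (p_sub n).symm
    _ < ε * c i₀ := hlt

theorem eventually_dist_lt_of_itinerary_eq (h : PiecewiseConvex T i₀ a c d)
    (hx : x ∈ regularSet T a c) {ε : ℝ} (hε : 0 < ε) :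
    ∀ᶠ n in atTop, ∀ y ∈ regularSet T a c,
      itinerary T (branchIndex i₀ a c) n y = itinerary T (branchIndex i₀ a c) n x →
        dist y x < ε := by
  obtain ⟨m, hm, prod_lt⟩ :=
    h.exists_prod_lt (h.frequently_branchIndex_ne hx) (mul_pos h.right_pos hε)
  filter_upwards [eventually_gt_atTop m] with n hn y hy hyx
  have hys (k : ℕ) (hk : k ≤ m) : T^[k] y ∈ Ico (a (branchIndex i₀ a c (T^[k] x)))
      (c (branchIndex i₀ a c (T^[k] x))) := by
    have symbol_eq : branchIndex i₀ a c (T^[k] y) = branchIndex i₀ a c (T^[k] x) :=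
      congrFun hyx ⟨k, hk.trans_lt hn⟩
    exact symbol_eq ▸ h.iterate_mem_branch hy k
  refine lt_of_mul_lt_mul_left ((h.mul_dist_le_prod hm hy hx hys fun k _ =>
    h.iterate_mem_branch hx k).trans_lt prod_lt) h.right_pos.le

end PiecewiseConvex

/-! ### Uniqueness of the invariant measure -/

namespace PiecewiseConvex

variable {ι : Type*} {T : ℝ → ℝ} {i₀ : ι} {a c d : ι → ℝ} {μ ν : Measure ℝ}

section Invariant

variable [Countable ι]

theorem exists_integral_abs_itinerary_sub_le [MeasurableSpace ι] [MeasurableSingletonClass ι]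
    (h : PiecewiseConvex T i₀ a c d) (hT : Measurable T) {g : ℝ → ℝ} (hg : Integrable g lam)
    (g_nonneg : ∀ x, 0 ≤ g x) {ε : ℝ} (hε : 0 < ε) :
    ∃ (n : ℕ) (q : (Fin n → ι) → ℝ≥0),
      Integrable (fun x => (q (itinerary T (branchIndex i₀ a c) n x) : ℝ)) lam ∧
      ∫ x, |q (itinerary T (branchIndex i₀ a c) n x) - g x| ∂lam ≤ ε :=
  exists_integral_abs_comp_sub_le (measurable_itinerary hT h.measurable_branchIndex)
    (h.ae_mem_regularSet hT)
    (fun _ hx _ hδ => h.eventually_dist_lt_of_itinerary_eq hx hδ) hg g_nonneg hε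

theorem hasConcaveCDF_of_measurePreserving (h : PiecewiseConvex T i₀ a c d) [IsFiniteMeasure ν]
    (hν : ν ≪ lam) (hTν : MeasurePreserving T ν ν) : HasConcaveCDF ν := by
  let _ : MeasurableSpace ι := ⊤
  have hT := hTν.measurable
  set g := fun x => (ν.rnDeriv lam x).toReal
  have g_integrable : Integrable g lam := Measure.integrable_toReal_rnDeriv
  have withDensity_g : (lam.withDensity fun x => .ofReal (g x)) = ν := by
    refine (withDensity_congr_ae ?_).trans (Measure.withDensity_rnDeriv_eq ν lam hν)
    filter_upwards [ν.rnDeriv_lt_top lam] with x hx using ENNReal.ofReal_toReal hx.ne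
  refine hasConcaveCDF_of_forall_approx hν fun ε hε => ?_
  obtain ⟨n, q, q_integrable, hq⟩ := h.exists_integral_abs_itinerary_sub_le hT g_integrable
    (fun _ => ENNReal.toReal_nonneg) hε
  have : IsFiniteMeasure (lam.withDensity fun x => q (itinerary T (branchIndex i₀ a c) n x)) := by
    simpa only [ENNReal.ofReal_coe_nnreal] using
      isFiniteMeasure_withDensity_ofReal q_integrable.hasFiniteIntegral
  refine ⟨_, h.hasConcaveCDF_map_withDensity_itinerary hT q, fun y => ?_⟩
  rw [← (hTν.iterate n).measureReal_preimage measurableSet_Iic.nullMeasurableSet,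
    map_measureReal_apply (hT.iterate n) measurableSet_Iic]
  have bound := abs_measureReal_withDensity_sub_le q_integrable g_integrable
    (fun _ => NNReal.coe_nonneg _) (fun _ => ENNReal.toReal_nonneg)
    (hT.iterate n (measurableSet_Iic (a := y)))
  simp only [ENNReal.ofReal_coe_nnreal, withDensity_g] at bound
  exact bound.trans hq

theorem ergodic (h : PiecewiseConvex T i₀ a c d) [IsFiniteMeasure μ] (hμ : μ ≪ lam)
    (hTμ : MeasurePreserving T μ μ) : Ergodic T μ := by
  refine ⟨hTμ, ⟨fun s hs hTs => ?_⟩⟩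
  have hasConcaveCDF_restrict {t : Set ℝ} (ht : MeasurableSet t) (hTt : T ⁻¹' t = t) :
      HasConcaveCDF (μ.restrict t) := by
    have invariant := hTμ.restrict_preimage ht
    rw [hTt] at invariant
    exact h.hasConcaveCDF_of_measurePreserving
      (Measure.restrict_le_self.absolutelyContinuous.trans hμ) invariant
  have singular : μ.restrict s ⟂ₘ μ.restrict sᶜ :=
    ⟨sᶜ, hs.compl, by simp [Measure.restrict_apply hs.compl], by simp [Measure.restrict_apply hs]⟩
  rw [eventuallyConst_set', ae_eq_empty, ae_eq_univ, ← Measure.restrict_eq_zero,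
    ← Measure.restrict_eq_zero]
  by_contra! hne
  exact (hasConcaveCDF_restrict hs hTs).not_mutuallySingular
    (hasConcaveCDF_restrict hs.compl (by rw [preimage_compl, hTs])) hne.1 hne.2 singular

theorem measurePreserving_unique (h : PiecewiseConvex T i₀ a c d) [IsProbabilityMeasure μ]
    [IsProbabilityMeasure ν] (hμ : μ ≪ lam) (hν : ν ≪ lam) (hTμ : MeasurePreserving T μ μ)
    (hTν : MeasurePreserving T ν ν) : ν = μ := by
  set κ := (2⁻¹ : ℝ≥0∞) • (μ + ν) with hκ
  have : IsProbabilityMeasure κ := ⟨by simp [hκ, ENNReal.inv_two_add_inv_two]⟩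
  have sum_ac : μ + ν ≪ κ := Measure.absolutelyContinuous_smul (by simp)
  have μ_ac : μ ≪ κ :=
    (Measure.absolutelyContinuous_of_le (Measure.le_add_right le_rfl)).trans sum_ac
  have ν_ac : ν ≪ κ :=
    (Measure.absolutelyContinuous_of_le (Measure.le_add_left le_rfl)).trans sum_ac
  have κ_ac : κ ≪ lam := (hμ.add_left hν).smul_left _
  have hTκ : MeasurePreserving T κ κ := (hTμ.add_measure hTν).smul_measure _
  have hergodic := h.ergodic κ_ac hTκ
  exact (hergodic.eq_of_absolutelyContinuous hTν ν_ac).trans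
    (hergodic.eq_of_absolutelyContinuous hTμ μ_ac).symm

end Invariant

theorem measurePreserving_iff (h : PiecewiseConvex T i₀ a c d) {T' : ℝ → ℝ} (hT' : Measurable T')
    (hTT' : ∀ i, EqOn T T' (Ico (a i) (c i))) (hν : ν ≪ lam) :
    MeasurePreserving T' ν ν ↔
      ∀ A : Set ℝ, MeasurableSet A → A ⊆ Icc 0 1 → ν (T ⁻¹' A) = ν A := by
  have preimage_ae_eq (A : Set ℝ) : (T ⁻¹' A : Set ℝ) =ᵐ[ν] T' ⁻¹' A := by
    filter_upwards [hν.ae_le h.ae_mem] with x ⟨i, hi⟩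
    change (T x ∈ A) = (T' x ∈ A)
    rw [hTT' i hi]
  have preimage_inter_ae_eq (A : Set ℝ) : (T ⁻¹' (A ∩ Icc 0 1) : Set ℝ) =ᵐ[ν] T ⁻¹' A := by
    filter_upwards [hν.ae_le h.ae_mem] with x ⟨i, hi⟩
    exact propext (and_iff_left (h.mapsTo i hi))
  have ae_mem_Icc : ∀ᵐ x ∂ν, x ∈ Icc (0 : ℝ) 1 := hν.ae_le (ae_restrict_mem measurableSet_Icc)
  refine ⟨fun hν' A hA _ => ?_, fun hν' => ⟨hT', Measure.ext fun A hA => ?_⟩⟩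
  · rw [measure_congr (preimage_ae_eq A), hν'.measure_preimage hA.nullMeasurableSet]
  · rw [Measure.map_apply hT' hA, ← measure_congr (preimage_ae_eq A),
      ← measure_congr (preimage_inter_ae_eq A),
      hν' _ (hA.inter measurableSet_Icc) inter_subset_right]
    exact measure_inter_conull ae_mem_Icc

end PiecewiseConvex

theorem mul_sub_left_le_of_hasDerivWithinAt_Ici {f : ℝ → ℝ} {a c D x : ℝ}
    (hf : ConvexOn ℝ (Ico a c) f) (hfa : f a = 0) (hD : HasDerivWithinAt f D (Ici a) a)
    (hx : x ∈ Ico a c) : D * (x - a) ≤ f x := by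
  rcases hx.1.eq_or_lt with rfl | hax
  · simp [hfa]
  have slope_bound := hf.le_slope_of_hasDerivWithinAt_Ioi (left_mem_Ico.2 (hax.trans hx.2)) hx hax
    (hD.mono Ioi_subset_Ici_self)
  rwa [slope_def_field, hfa, sub_zero, le_div_iff₀ (sub_pos.2 hax)] at slope_bound

theorem summable_of_summable_some {α M : Type*} [AddCommMonoid M] [TopologicalSpace M]
    [ContinuousAdd M] {f : Option α → M} (hf : Summable fun i => f (some i)) : Summable f :=
  (Equiv.optionEquivSumPUnit.{0} α).symm.summable_iff.1
    (.sum _ hf (hasSum_fintype _).summable)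

theorem TpcInfty.piecewiseConvex {τ : ℝ → ℝ} {a₁ α₁ : ℝ} {a c d : ℕ → ℝ}
    (hτ : TpcInfty τ a₁ α₁ a c d) :
    PiecewiseConvex τ none (Option.elim · 0 a) (Option.elim · a₁ c) (Option.elim · α₁ d) := by
  have left_nonneg (i : ℕ) : 0 ≤ a i := hτ.a₁_pos.le.trans (hτ.branch_sub i).1
  have disjoint_first (i : ℕ) : Disjoint (Ico 0 a₁) (Ico (a i) (c i)) :=
    disjoint_left.2 fun x hx hxi => (hx.2.trans_le (hτ.branch_sub i).1).not_ge hxi.1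
  exact {
    mapsTo := Option.forall.2 ⟨hτ.mapsTo.mono_left fun x hx => ⟨hx.1, hx.2.le.trans hτ.a₁_le⟩,
      fun i => hτ.mapsTo.mono_left fun x hx =>
        ⟨(left_nonneg i).trans hx.1, hx.2.le.trans (hτ.branch_sub i).2.2⟩⟩
    left_nonneg := Option.forall.2 ⟨le_rfl, left_nonneg⟩
    left_lt_right := Option.forall.2 ⟨hτ.a₁_pos, fun i => (hτ.branch_sub i).2.1⟩
    right_le_one := Option.forall.2 ⟨hτ.a₁_le, fun i => (hτ.branch_sub i).2.2⟩
    disjoint := by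
      rintro (_ | i) (_ | j) hij
      · exact (hij rfl).elim
      · exact disjoint_first j
      · exact (disjoint_first i).symm
      · exact hτ.branch_disj fun hij' => hij (congrArg some hij')
    ae_mem := by
      obtain ⟨E, hE, cover⟩ := hτ.cover
      filter_upwards [ae_restrict_mem measurableSet_Icc, hE.ae_notMem lam] with x hx hxE
      rcases (cover hx).resolve_right hxE with hx | hx
      · exact ⟨none, hx⟩
      · exact (mem_iUnion.1 hx).imp' some fun _ => id
    convexOn := Option.forall.2 ⟨hτ.conv₀, hτ.conv⟩
    map_left := Option.forall.2 ⟨hτ.map₀, hτ.map_a⟩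
    slope_pos := Option.forall.2 ⟨zero_lt_one.trans hτ.α₁_gt, hτ.d_pos⟩
    mul_sub_left_le := Option.forall.2 ⟨fun _ hx =>
        mul_sub_left_le_of_hasDerivWithinAt_Ici hτ.conv₀ hτ.map₀ hτ.deriv₀ hx,
      fun i _ hx =>
        mul_sub_left_le_of_hasDerivWithinAt_Ici (hτ.conv i) (hτ.map_a i) (hτ.deriv_a i) hx⟩
    summable_inv := summable_of_summable_some hτ.sum_d
    left_zero := rfl
    one_lt_slope := hτ.α₁_gt }

theorem stmt3_general {ι : Type*} [Countable ι] {T : ℝ → ℝ} {i₀ : ι} {a c d : ι → ℝ}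
    (h : PiecewiseConvex T i₀ a c d) :
    ∃ f : ℝ → ℝ, Integrable f lam ∧ (∀ x ∈ Icc (0 : ℝ) 1, 0 ≤ f x) ∧ AntitoneOn f (Icc 0 1) ∧
      (∫ x, f x ∂lam) = 1 ∧
      (∀ A : Set ℝ, MeasurableSet A → A ⊆ Icc 0 1 →
        lam.withDensity (fun x => ENNReal.ofReal (f x)) (T ⁻¹' A) =
          lam.withDensity (fun x => ENNReal.ofReal (f x)) A) ∧
      (∀ ν : Measure ℝ, IsProbabilityMeasure ν → ν ≪ lam →
        (∀ A : Set ℝ, MeasurableSet A → A ⊆ Icc 0 1 → ν (T ⁻¹' A) = ν A) →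
        ν = lam.withDensity (fun x => ENNReal.ofReal (f x))) := by
  obtain ⟨T', hT', hTT'⟩ := h.exists_measurable_eqOn
  have h' := h.congr hTT'
  obtain ⟨M, μ, hμM, hμ, hTμ⟩ := h'.exists_measurePreserving hT'
  have μ_ac : μ ≪ lam := Measure.absolutelyContinuous_of_le_smul hμM
  obtain ⟨f, f_integrable, f_nonneg, f_antitone, withDensity_f⟩ :=
    (h'.hasConcaveCDF_of_measurePreserving μ_ac hTμ).exists_antitoneOn_density hμM
  refine ⟨f, f_integrable, fun x _ => f_nonneg x, f_antitone, ?_, ?_, ?_⟩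
  · rw [integral_eq_lintegral_of_nonneg_ae (.of_forall f_nonneg) f_integrable.aestronglyMeasurable,
      ← setLIntegral_univ, ← withDensity_apply _ MeasurableSet.univ, withDensity_f, measure_univ,
      ENNReal.toReal_one]
  · rw [withDensity_f]
    exact (h.measurePreserving_iff hT' hTT' μ_ac).1 hTμ
  · intro ν hν ν_ac hTν
    rw [withDensity_f]
    exact h'.measurePreserving_unique μ_ac ν_ac hTμ ((h.measurePreserving_iff hT' hTT' ν_ac).2 hTν)

/-- Any `τ ∈ T_pc^∞(I)` admits a unique absolutely continuous invariant probability
measure `μ = f*·λ`, whose density `f*` is non-negative and non-increasing. -/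
theorem stmt3 (τ : ℝ → ℝ) (a₁ α₁ : ℝ) (a c d : ℕ → ℝ)
    (hτ : TpcInfty τ a₁ α₁ a c d) :
    ∃ f : ℝ → ℝ, MeasureTheory.Integrable f lam ∧
      (∀ x ∈ Set.Icc (0:ℝ) 1, 0 ≤ f x) ∧
      AntitoneOn f (Set.Icc 0 1) ∧
      (∫ x, f x ∂lam) = 1 ∧
      (∀ A : Set ℝ, MeasurableSet A → A ⊆ Set.Icc 0 1 →
        lam.withDensity (fun x => ENNReal.ofReal (f x)) (τ ⁻¹' A) =
        lam.withDensity (fun x => ENNReal.ofReal (f x)) A) ∧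
      (∀ ν : MeasureTheory.Measure ℝ, MeasureTheory.IsProbabilityMeasure ν →
        ν ≪ lam →
        (∀ A : Set ℝ, MeasurableSet A → A ⊆ Set.Icc 0 1 → ν (τ ⁻¹' A) = ν A) →
        ν = lam.withDensity (fun x => ENNReal.ofReal (f x))) :=
  stmt3_general hτ.piecewiseConvex
end

section
/- Let τ ∈ T_pc^{∞,0}(I). Then there exists a non-increasing, non-negative function f* ∈ L¹(I,λ) with ∫₀¹ f* dλ = 1 such that the probability measure μ = f*·λ is τ-invariant (i.e., μ(τ⁻¹(A)) = μ(A) for every Borel set A ⊆ [0,1]). Moreover μ is the unique τ-invariant probability measure absolutely continuous with respect to λ. -/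
open MeasureTheory Set Filter

/-- The class `T_pc^{∞,0}(I)` of piecewise convex maps with countably many branches whose
left endpoints accumulate at `0`: a strictly decreasing sequence `b j = a_{0,-(j+1)}` of left
endpoints tending to `0` (branches `[b j, c' j)`, right derivatives `e j = τ'(b j)` there),
together with a countable family of branches `[a i, c i) ⊆ [b 0, 1]` (right derivatives
`d i = τ'(a i)`), all branches pairwise disjoint and covering `[0,1]` up to a countable set,
with `D₁ = ∑ 1/e j < 1` and `∑ 1/d i < ∞`. -/
structure TpcInftyZero (τ : ℝ → ℝ) (a c b c' d e : ℕ → ℝ) : Prop where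
  mapsTo : Set.MapsTo τ (Set.Icc 0 1) (Set.Icc 0 1)
  b_anti : StrictAnti b
  b_pos : ∀ j, 0 < b j
  b_lim : Filter.Tendsto b Filter.atTop (nhds 0)
  b_lt : ∀ j, b j < c' j
  c'_le : ∀ j, c' j ≤ 1
  a_mem : ∀ i, b 0 ≤ a i ∧ a i < c i ∧ c i ≤ 1
  branch_disj : Pairwise (Function.onFun Disjoint fun p : ℕ ⊕ ℕ =>
    Sum.elim (fun i => Set.Ico (a i) (c i)) (fun j => Set.Ico (b j) (c' j)) p)
  cover : ∃ E : Set ℝ, E.Countable ∧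
    Set.Icc (0:ℝ) 1 ⊆ ((⋃ i, Set.Ico (a i) (c i)) ∪ ⋃ j, Set.Ico (b j) (c' j)) ∪ E
  cont_a : ∀ i, ContinuousOn τ (Set.Ico (a i) (c i))
  conv_a : ∀ i, ConvexOn ℝ (Set.Ico (a i) (c i)) τ
  diff_a : ∀ i, ∀ x ∈ Set.Ico (a i) (c i), DifferentiableWithinAt ℝ τ (Set.Ico (a i) (c i)) x
  map_a : ∀ i, τ (a i) = 0
  deriv_a : ∀ i, HasDerivWithinAt τ (d i) (Set.Ici (a i)) (a i)
  d_pos : ∀ i, 0 < d i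
  cont_b : ∀ j, ContinuousOn τ (Set.Ico (b j) (c' j))
  conv_b : ∀ j, ConvexOn ℝ (Set.Ico (b j) (c' j)) τ
  diff_b : ∀ j, ∀ x ∈ Set.Ico (b j) (c' j), DifferentiableWithinAt ℝ τ (Set.Ico (b j) (c' j)) x
  map_b : ∀ j, τ (b j) = 0
  deriv_b : ∀ j, HasDerivWithinAt τ (e j) (Set.Ici (b j)) (b j)
  e_pos : ∀ j, 0 < e j
  sum_d : Summable fun i => 1 / d i
  sum_e : Summable fun j => 1 / e j
  D₁_lt : (∑' j, 1 / e j) < 1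

/-!
Work with measures on `[0,1]` whose distribution function is concave, i.e. with a non-increasing
density. Every inverse branch of `τ` is concave, so push-forward under `τ` preserves this class;
as the branches near `0` are jointly expanding, a Lasota-Yorke inequality
`sup g ≤ D sup f + C ∫ f`, `D < 1`, bounds the density `g` of the push-forward of the measure
with density `f`, and the densities of probability measures stay below a fixed `M`.

All measures of mass `c` in the class with density at most `M c` dominate the same multiple
`(c / 2) λ|[0,t]`, for `t` small. If `t` lies in the interior of no branch, what remains after
subtracting it still has a distribution function that is concave on each branch, which is all
that is needed for its push-forward to be back in the class. Removing the common part at every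
step makes the push-forwards of two measures of equal mass approach each other in total variation
at the rate `(1 - t / 2) ^ n`.

Hence the iterated push-forwards of `λ` converge setwise to an invariant measure in the class.
For a set `A` with `τ⁻¹ A = A`, comparing `λ|[0,t]` with `t λ` gives `λ(A ∩ [0,t]) = t λ(A)` for
every `t`, so `λ(A)` is `0` or `1`, and ergodicity forces uniqueness.
-/

open scoped Topology NNReal

/-! ### Distribution functions -/

/-- The distribution function `x ↦ m (-∞, x]` of a finite measure on the line. Unlike
`ProbabilityTheory.cdf` it is meaningful for measures of any finite mass. -/
noncomputable def distFun (m : Measure ℝ) (x : ℝ) : ℝ := m.real (Iic x)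

section DistFun

variable {m : Measure ℝ}

theorem distFun_nonneg (x : ℝ) : 0 ≤ distFun m x := measureReal_nonneg

theorem monotone_distFun [IsFiniteMeasure m] : Monotone (distFun m) :=
  fun _ _ h => measureReal_mono (Iic_subset_Iic.2 h)

theorem distFun_le_mass [IsFiniteMeasure m] (x : ℝ) : distFun m x ≤ m.real univ :=
  measureReal_mono (subset_univ _)

theorem measureReal_Ioc_eq_distFun_sub [IsFiniteMeasure m] {x y : ℝ} (h : x ≤ y) :
    m.real (Ioc x y) = distFun m y - distFun m x := by
  rw [← Iic_sdiff_Iic, measureReal_sdiff (Iic_subset_Iic.2 h) measurableSet_Iic, distFun, distFun]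

theorem distFun_smul (c : ℝ≥0) (x : ℝ) : distFun (c • m) x = c * distFun m x :=
  measureReal_nnreal_smul_apply c

theorem distFun_add {k : Measure ℝ} [IsFiniteMeasure k] [IsFiniteMeasure m] (x : ℝ) :
    distFun (k + m) x = distFun k x + distFun m x :=
  measureReal_add_apply

end DistFun

instance inst_s6 : IsProbabilityMeasure lam := ⟨by simp [lam]⟩

theorem lam_restrict_Iic (t : ℝ) :
    lam.restrict (Iic t) = volume.restrict (Icc 0 (min t 1)) := by
  have h : Iic t ∩ Icc 0 1 = Icc 0 (min t 1) := by ext; simp; tauto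
  rw [lam, Measure.restrict_restrict measurableSet_Iic, h]

theorem lam_restrict_Iic_one : lam.restrict (Iic 1) = lam := by
  rw [lam_restrict_Iic, min_self, lam]

theorem distFun_lam_restrict_Iic {t x : ℝ} (ht₀ : 0 ≤ t) (ht₁ : t ≤ 1) (hx : 0 ≤ x) :
    distFun (lam.restrict (Iic t)) x = min x t := by
  rw [distFun, measureReal_restrict_apply measurableSet_Iic, Iic_inter_Iic,
    ← measureReal_restrict_apply_univ, lam_restrict_Iic, measureReal_restrict_apply_univ,
    Real.volume_real_Icc, sub_zero, min_eq_left ((min_le_right x t).trans ht₁),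
    max_eq_left (le_min hx ht₀)]

theorem mass_lam_restrict_Iic {t : ℝ} (ht₀ : 0 ≤ t) (ht₁ : t ≤ 1) :
    (lam.restrict (Iic t)).real univ = t := by
  simpa [distFun] using distFun_lam_restrict_Iic ht₀ ht₁ ht₀

theorem distFun_eq_zero_of_absolutelyContinuous {μ : Measure ℝ} (hμ : μ ≪ lam) {x : ℝ}
    (hx : x ≤ 0) : distFun μ x = 0 := by
  rw [distFun, measureReal_def, hμ, ENNReal.toReal_zero]
  rw [← Measure.restrict_eq_zero, lam_restrict_Iic, Measure.restrict_eq_zero, Real.volume_Icc,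
    ENNReal.ofReal_eq_zero]
  simp [hx]

theorem distFun_min_one_of_absolutelyContinuous {μ : Measure ℝ} (hμ : μ ≪ lam) (x : ℝ) :
    distFun μ (min x 1) = distFun μ x := by
  have hone : μ (Iic 1)ᶜ = 0 := hμ <| (prob_compl_eq_zero_iff measurableSet_Iic).2 <| by
    rw [← Measure.restrict_apply_univ, lam_restrict_Iic_one, measure_univ]
  rw [distFun, distFun, ← Iic_inter_Iic, measureReal_def, measureReal_def,
    measure_inter_conull hone]

theorem ext_of_distFun_of_absolutelyContinuous {μ ν : Measure ℝ} [IsFiniteMeasure μ]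
    [IsFiniteMeasure ν] (hμ : μ ≪ lam) (hν : ν ≪ lam)
    (h : ∀ x ∈ Ioc 0 1, distFun μ x = distFun ν x) : μ = ν := by
  refine Measure.ext_of_Iic μ ν fun x => (measureReal_eq_measureReal_iff).1 ?_
  change distFun μ x = distFun ν x
  rcases le_or_gt x 0 with hx | hx
  · rw [distFun_eq_zero_of_absolutelyContinuous hμ hx,
      distFun_eq_zero_of_absolutelyContinuous hν hx]
  · rw [← distFun_min_one_of_absolutelyContinuous hμ, ← distFun_min_one_of_absolutelyContinuous hν]
    exact h _ ⟨lt_min hx one_pos, min_le_right x 1⟩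

/-! ### Measures with a non-increasing density -/

/-- `m` is a measure on `[0,1]` with a non-increasing density bounded by `K`. The condition is
put on the distribution function, whose behaviour under push-forwards is explicit;
`HasAntitoneDensity.exists_density` recovers the density. -/
structure HasAntitoneDensity (m : Measure ℝ) (K : ℝ) : Prop where
  measure_Ioi_one : m (Ioi 1) = 0
  concaveOn : ConcaveOn ℝ (Ici 0) (distFun m)
  distFun_le : ∀ x, 0 ≤ x → distFun m x ≤ K * x

theorem hasAntitoneDensity_lam_restrict_Iic {t : ℝ} (ht₀ : 0 ≤ t) (ht₁ : t ≤ 1) :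
    HasAntitoneDensity (lam.restrict (Iic t)) 1 where
  measure_Ioi_one := by
    rw [Measure.restrict_apply measurableSet_Ioi, Ioi_inter_Iic, Ioc_eq_empty ht₁.not_gt,
      measure_empty]
  concaveOn := ((concaveOn_id (convex_Ici 0)).inf (concaveOn_const t (convex_Ici 0))).congr
    fun _ hx => (distFun_lam_restrict_Iic ht₀ ht₁ hx).symm
  distFun_le x hx := by
    rw [distFun_lam_restrict_Iic ht₀ ht₁ hx, one_mul]
    exact min_le_left x t

theorem hasAntitoneDensity_lam : HasAntitoneDensity lam 1 := by
  simpa only [lam_restrict_Iic_one] using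
    hasAntitoneDensity_lam_restrict_Iic zero_le_one le_rfl

namespace HasAntitoneDensity

variable {m : Measure ℝ} {K : ℝ}

theorem mono (h : HasAntitoneDensity m K) {K' : ℝ} (hK : K ≤ K') : HasAntitoneDensity m K' where
  measure_Ioi_one := h.measure_Ioi_one
  concaveOn := h.concaveOn
  distFun_le x hx := (h.distFun_le x hx).trans (mul_le_mul_of_nonneg_right hK hx)

theorem smul (h : HasAntitoneDensity m K) (c : ℝ≥0) : HasAntitoneDensity (c • m) (c * K) where
  measure_Ioi_one := by simp [h.measure_Ioi_one]
  concaveOn := (h.concaveOn.smul c.2).congr fun x _ => (distFun_smul c x).symm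
  distFun_le x hx := by
    rw [distFun_smul, mul_assoc]
    exact mul_le_mul_of_nonneg_left (h.distFun_le x hx) c.2

theorem of_tendsto {ι : Type*} {u : Filter ι} [u.NeBot] {k : ι → Measure ℝ}
    [IsFiniteMeasure m] (hk : ∀ n, HasAntitoneDensity (k n) K)
    (hlim : ∀ A, MeasurableSet A → Tendsto (fun n => (k n).real A) u (𝓝 (m.real A))) :
    HasAntitoneDensity m K where
  measure_Ioi_one := by
    rw [← measureReal_eq_zero_iff]
    refine tendsto_nhds_unique (hlim _ measurableSet_Ioi) (tendsto_const_nhds.congr fun n => ?_)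
    rw [measureReal_def, (hk n).measure_Ioi_one, ENNReal.toReal_zero]
  concaveOn := ⟨convex_Ici 0, fun x hx y hy α β hα hβ hαβ =>
    le_of_tendsto_of_tendsto'
      (((hlim _ measurableSet_Iic).const_mul α).add ((hlim _ measurableSet_Iic).const_mul β))
      (hlim _ measurableSet_Iic) fun n => (hk n).concaveOn.2 hx hy hα hβ hαβ⟩
  distFun_le x hx := le_of_tendsto' (hlim _ measurableSet_Iic) fun n => (hk n).distFun_le x hx

theorem nonneg (h : HasAntitoneDensity m K) : 0 ≤ K := by
  simpa using (distFun_nonneg 1).trans (h.distFun_le 1 zero_le_one)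

theorem distFun_eq_mass (h : HasAntitoneDensity m K) {x : ℝ} (hx : 1 ≤ x) :
    distFun m x = m.real univ := by
  refine measureReal_congr (ae_eq_univ.2 (measure_mono_null ?_ h.measure_Ioi_one))
  rw [compl_Iic]
  exact Ioi_subset_Ioi hx

variable [IsFiniteMeasure m]

theorem distFun_of_nonpos (h : HasAntitoneDensity m K) {x : ℝ} (hx : x ≤ 0) :
    distFun m x = 0 :=
  le_antisymm ((monotone_distFun hx).trans (by simpa using h.distFun_le 0 le_rfl))
    (distFun_nonneg x)

theorem distFun_sub_le_div_mul (h : HasAntitoneDensity m K) {x y : ℝ} (hx : 0 < x)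
    (hxy : x ≤ y) : distFun m y - distFun m x ≤ distFun m x / x * (y - x) := by
  rcases hxy.eq_or_lt with rfl | hxy
  · simp
  have hslope := h.concaveOn.slope_anti_adjacent self_mem_Ici (hx.trans hxy).le hx hxy
  rw [h.distFun_of_nonpos le_rfl, sub_zero, sub_zero] at hslope
  exact (div_le_iff₀ (sub_pos.2 hxy)).1 hslope

theorem distFun_sub_le_mass_div_mul (h : HasAntitoneDensity m K) {δ x y : ℝ} (hδ : 0 < δ)
    (hx : δ ≤ x) (hxy : x ≤ y) : distFun m y - distFun m x ≤ m.real univ / δ * (y - x) :=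
  (h.distFun_sub_le_div_mul (hδ.trans_le hx) hxy).trans <| mul_le_mul_of_nonneg_right
    (div_le_div₀ measureReal_nonneg (distFun_le_mass x) hδ hx) (sub_nonneg.2 hxy)

theorem distFun_sub_le (h : HasAntitoneDensity m K) {x y : ℝ} (hxy : x ≤ y) :
    distFun m y - distFun m x ≤ K * (y - x) := by
  rcases le_or_gt x 0 with hx | hx
  · rw [h.distFun_of_nonpos hx, sub_zero]
    rcases le_total 0 y with hy | hy
    · exact (h.distFun_le y hy).trans (mul_le_mul_of_nonneg_left (by linarith) h.nonneg)
    · rw [h.distFun_of_nonpos hy]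
      exact mul_nonneg h.nonneg (sub_nonneg.2 hxy)
  · exact (h.distFun_sub_le_div_mul hx hxy).trans <| mul_le_mul_of_nonneg_right
      ((div_le_iff₀ hx).2 (h.distFun_le x hx.le)) (sub_nonneg.2 hxy)

theorem continuous_distFun (h : HasAntitoneDensity m K) : Continuous (distFun m) := by
  refine (LipschitzWith.of_le_add_mul' K fun x y => ?_).continuous
  rcases le_total x y with hxy | hxy
  · exact (monotone_distFun hxy).trans
      (le_add_of_nonneg_right (mul_nonneg h.nonneg dist_nonneg))
  · rw [Real.dist_eq, abs_of_nonneg (sub_nonneg.2 hxy)]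
    linarith [h.distFun_sub_le hxy]

theorem exists_antitone_hasDerivWithinAt (h : HasAntitoneDensity m K) :
    ∃ f : ℝ → ℝ, Antitone f ∧ (∀ x, 0 ≤ f x) ∧ (∀ x, f x ≤ K) ∧
      ∀ x, 0 < x → HasDerivWithinAt (distFun m) (f x) (Ioi x) x := by
  set g : ℝ → ℝ := fun x => -derivWithin (-distFun m) (Ioi x) x
  have hconv : ConvexOn ℝ (Ici 0) (-distFun m) := h.concaveOn.neg
  have hderiv {x : ℝ} (hx : 0 < x) : HasDerivWithinAt (distFun m) (g x) (Ioi x) x := by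
    simpa using (hconv.hasDerivWithinAt_rightDeriv_of_mem_interior (by simpa using hx)).neg
  have hslope {x : ℝ} (hx : 0 < x) : Tendsto (slope (distFun m) x) (𝓝[>] x) (𝓝 (g x)) :=
    (hasDerivWithinAt_iff_tendsto_slope' self_notMem_Ioi).1 (hderiv hx)
  have hg₀ {x : ℝ} (hx : 0 < x) : 0 ≤ g x := ge_of_tendsto' (hslope hx) fun y =>
    (monotone_distFun.monotoneOn univ).slope_nonneg (mem_univ x) (mem_univ y)
  have hgK {x : ℝ} (hx : 0 < x) : g x ≤ K := le_of_tendsto (hslope hx) <| by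
    filter_upwards [self_mem_nhdsWithin] with y hy
    rw [slope_def_field, div_le_iff₀ (sub_pos.2 hy)]
    exact h.distFun_sub_le (le_of_lt hy)
  refine ⟨fun x => if 0 < x then g x else K, fun x y hxy => ?_, fun x => ?_, fun x => ?_,
    fun x hx => by simpa only [if_pos hx] using hderiv hx⟩
  · by_cases hx : 0 < x
    · have hy := hx.trans_le hxy
      simpa only [if_pos hx, if_pos hy] using neg_le_neg
        (hconv.monotoneOn_rightDeriv (by simpa using hx) (by simpa using hy) hxy)
    · by_cases hy : 0 < y
      · simpa only [if_neg hx, if_pos hy] using hgK hy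
      · simp only [if_neg hx, if_neg hy, le_refl]
  · dsimp only
    split_ifs with hx
    exacts [hg₀ hx, h.nonneg]
  · dsimp only
    split_ifs with hx
    exacts [hgK hx, le_rfl]

theorem exists_density (h : HasAntitoneDensity m K) :
    ∃ f : ℝ → ℝ, Antitone f ∧ (∀ x, 0 ≤ f x) ∧ (∀ x, f x ≤ K) ∧
      m = lam.withDensity fun x => ENNReal.ofReal (f x) := by
  obtain ⟨f, hf, hf₀, hfK, hderiv⟩ := h.exists_antitone_hasDerivWithinAt
  refine ⟨f, hf, hf₀, hfK, Measure.ext_of_Iic _ _ fun x => ?_⟩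
  rw [withDensity_apply _ measurableSet_Iic, lam_restrict_Iic,
    ← ofReal_integral_eq_lintegral_ofReal
      ((hf.antitoneOn _).integrableOn_isCompact isCompact_Icc) (.of_forall hf₀),
    ← ofReal_measureReal]
  congr 1
  change distFun m x = _
  rcases lt_or_ge x 0 with hx | hx
  · rw [h.distFun_of_nonpos hx.le, Icc_eq_empty (by simp [hx]), Measure.restrict_empty,
      integral_zero_measure]
  have hx' : 0 ≤ min x 1 := le_min hx zero_le_one
  have hFTC := intervalIntegral.integral_eq_sub_of_hasDeriv_right_of_le hx'
    h.continuous_distFun.continuousOn (fun z hz => hderiv z hz.1) hf.intervalIntegrable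
  rw [integral_Icc_eq_integral_Ioc, ← intervalIntegral.integral_of_le hx', hFTC,
    h.distFun_of_nonpos le_rfl, sub_zero]
  rcases le_total x 1 with hx₁ | hx₁
  · rw [min_eq_left hx₁]
  · rw [min_eq_right hx₁, h.distFun_eq_mass hx₁, h.distFun_eq_mass le_rfl]

theorem le_smul_lam (h : HasAntitoneDensity m K) : m ≤ K.toNNReal • lam := by
  obtain ⟨f, -, -, hfK, rfl⟩ := h.exists_density
  calc lam.withDensity (fun x => ENNReal.ofReal (f x))
      ≤ lam.withDensity fun _ => ENNReal.ofReal K :=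
        withDensity_mono (.of_forall fun x => ENNReal.ofReal_le_ofReal (hfK x))
    _ = K.toNNReal • lam := withDensity_const _

theorem absolutelyContinuous (h : HasAntitoneDensity m K) : m ≪ lam :=
  (Measure.absolutelyContinuous_of_le h.le_smul_lam).trans Measure.smul_absolutelyContinuous

theorem smul_lam_restrict_Iic_le (h : HasAntitoneDensity m K) {t : ℝ} (ht : 0 ≤ t) :
    (m.real univ - K * t).toNNReal • lam.restrict (Iic t) ≤ m := by
  obtain ⟨f, hf, hf₀, -, hm⟩ := h.exists_density
  have hIoi : m (Ioi t) ≤ ENNReal.ofReal (f t) := by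
    rw [hm, withDensity_apply _ measurableSet_Ioi]
    calc ∫⁻ x in Ioi t, ENNReal.ofReal (f x) ∂lam
        ≤ ∫⁻ _ in Ioi t, ENNReal.ofReal (f t) ∂lam :=
          setLIntegral_mono measurable_const fun x hx =>
            ENNReal.ofReal_le_ofReal (hf (le_of_lt hx))
      _ ≤ ENNReal.ofReal (f t) := by
          rw [setLIntegral_const]
          exact mul_le_of_le_one_right' prob_le_one
  have hft : m.real univ - K * t ≤ f t := by
    have hIic := h.distFun_le t ht
    have hsum := measureReal_add_measureReal_compl (μ := m) (measurableSet_Iic (a := t))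
    have hcompl : m.real (Iic t)ᶜ ≤ f t := by
      rw [compl_Iic]
      exact ENNReal.toReal_le_of_le_ofReal (hf₀ t) hIoi
    rw [distFun] at hIic
    linarith
  calc (m.real univ - K * t).toNNReal • lam.restrict (Iic t)
      = (lam.restrict (Iic t)).withDensity
          fun _ => ENNReal.ofReal (m.real univ - K * t) := (withDensity_const _).symm
    _ ≤ (lam.restrict (Iic t)).withDensity fun x => ENNReal.ofReal (f x) :=
        withDensity_mono <| (ae_restrict_iff' measurableSet_Iic).2 <| .of_forall fun x hx =>
          ENNReal.ofReal_le_ofReal (hft.trans (hf hx))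
    _ = m.restrict (Iic t) := by rw [hm, restrict_withDensity measurableSet_Iic]
    _ ≤ m := Measure.restrict_le_self

theorem half_mass_smul_lam_restrict_Iic_le {M : ℝ} (h : HasAntitoneDensity m (M * m.real univ))
    {t : ℝ} (ht₀ : 0 ≤ t) (ht : 2 * M * t ≤ 1) :
    (m.real univ / 2).toNNReal • lam.restrict (Iic t) ≤ m := by
  have hmass : 0 ≤ m.real univ := measureReal_nonneg
  have hle : m.real univ / 2 ≤ m.real univ - M * m.real univ * t := by nlinarith
  refine le_trans (fun A => ?_) (h.smul_lam_restrict_Iic_le ht₀)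
  simp only [Measure.smul_apply]
  gcongr

end HasAntitoneDensity

/-! ### Setwise limits and uniqueness of invariant measures -/

section SetwiseLimit

variable {α : Type*} [MeasurableSpace α]

theorem hasSum_measureReal_iUnion {m : Measure α} [IsFiniteMeasure m] {s : ℕ → Set α}
    (hs : ∀ i, MeasurableSet (s i)) (hd : Pairwise (Function.onFun Disjoint s)) :
    HasSum (fun i => m.real (s i)) (m.real (⋃ i, s i)) := by
  simpa only [Measure.toSignedMeasure_apply_measurable (hs _),
    Measure.toSignedMeasure_apply_measurable (MeasurableSet.iUnion hs)]
    using m.toSignedMeasure.m_iUnion hs hd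

variable {ι : Type*} {u : Filter ι} [u.NeBot] {m : ι → Measure α} {ν : Measure α}
  [IsFiniteMeasure ν]

theorem hasSum_iUnion_of_tendsto_of_le (hle : ∀ n, m n ≤ ν) {l : Set α → ℝ}
    (hl : ∀ A, MeasurableSet A → Tendsto (fun n => (m n).real A) u (𝓝 (l A))) {s : ℕ → Set α}
    (hs : ∀ i, MeasurableSet (s i)) (hd : Pairwise (Function.onFun Disjoint s)) :
    HasSum (fun i => l (s i)) (l (⋃ i, s i)) := by
  have hfin (n : ι) : IsFiniteMeasure (m n) := isFiniteMeasure_of_le ν (hle n)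
  have hν : Summable fun i => ν.real (s i) := (hasSum_measureReal_iUnion hs hd).summable
  have hmν (n : ι) (i : ℕ) : (m n).real (s i) ≤ ν.real (s i) :=
    ENNReal.toReal_mono (measure_ne_top _ _) (hle n _)
  have hsum : Summable fun i => l (s i) :=
    hν.of_nonneg_of_le (fun i => ge_of_tendsto' (hl _ (hs i)) fun n => measureReal_nonneg)
      fun i => le_of_tendsto' (hl _ (hs i)) fun n => hmν n i
  have htsum : Tendsto (fun n => ∑' i, (m n).real (s i)) u (𝓝 (∑' i, l (s i))) :=
    tendsto_tsum_of_dominated_convergence hν (fun i => hl _ (hs i)) <| .of_forall fun n i => by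
      rw [Real.norm_of_nonneg measureReal_nonneg]
      exact hmν n i
  refine hsum.hasSum_iff.2 (tendsto_nhds_unique htsum ((hl _ (MeasurableSet.iUnion hs)).congr ?_))
  exact fun n => (hasSum_measureReal_iUnion hs hd).tsum_eq.symm

theorem exists_measure_tendsto_of_le_s6 (hle : ∀ n, m n ≤ ν)
    (hlim : ∀ A, MeasurableSet A → ∃ a, Tendsto (fun n => (m n).real A) u (𝓝 a)) :
    ∃ μ : Measure α, IsFiniteMeasure μ ∧
      ∀ A, MeasurableSet A → Tendsto (fun n => (m n).real A) u (𝓝 (μ.real A)) := by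
  choose! l hl using hlim
  have hl₀ {A : Set α} (hA : MeasurableSet A) : 0 ≤ l A :=
    ge_of_tendsto' (hl A hA) fun n => measureReal_nonneg
  have hempty : l ∅ = 0 :=
    tendsto_nhds_unique (hl ∅ .empty) (tendsto_const_nhds.congr fun n => measureReal_empty.symm)
  set μ : Measure α := Measure.ofMeasurable (fun A _ => ENNReal.ofReal (l A)) (by simp [hempty])
    fun s hs hd => by
      have hsum := hasSum_iUnion_of_tendsto_of_le hle hl hs hd
      rw [← ENNReal.ofReal_tsum_of_nonneg (fun i => hl₀ (hs i)) hsum.summable, hsum.tsum_eq]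
  have hμ {A : Set α} (hA : MeasurableSet A) : μ A = ENNReal.ofReal (l A) :=
    Measure.ofMeasurable_apply A hA
  refine ⟨μ, ⟨by rw [hμ .univ]; exact ENNReal.ofReal_lt_top⟩, fun A hA => ?_⟩
  rw [measureReal_def, hμ hA, ENNReal.toReal_ofReal (hl₀ hA)]
  exact hl A hA

end SetwiseLimit

section Ergodic

variable {α : Type*} [MeasurableSpace α] {T : α → α} {κ μ ν : Measure α}

theorem preErgodic_of_absolutelyContinuous (hT : PreErgodic T κ) (hμ : μ ≪ κ) :
    PreErgodic T μ :=
  ⟨fun _ hs hTs => (hT.aeconst_set hs hTs).anti hμ.ae_le⟩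

theorem eq_of_preErgodic_of_absolutelyContinuous [IsFiniteMeasure μ] [IsFiniteMeasure ν]
    (hT : PreErgodic T κ) (hμκ : μ ≪ κ) (hνκ : ν ≪ κ) (hμ : MeasurePreserving T μ μ)
    (hν : MeasurePreserving T ν ν) (huniv : μ univ = ν univ) : μ = ν := by
  have hadd {ρ : Measure α} (hρ : MeasurePreserving T ρ ρ) : MeasurePreserving T (μ + ρ) (μ + ρ) :=
    ⟨hρ.measurable, by rw [Measure.map_add _ _ hρ.measurable, hμ.map_eq, hρ.map_eq]⟩
  have herg : Ergodic T (μ + ν) :=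
    ⟨hadd hν, preErgodic_of_absolutelyContinuous hT (hμκ.add_left hνκ)⟩
  have hac : μ ≪ μ + ν := Measure.AbsolutelyContinuous.rfl.add_right ν
  have hμμ : μ + μ = μ + ν := herg.eq_of_absolutelyContinuous_measure_univ_eq (hadd hμ)
    (hac.add_left hac) (by simp only [Measure.add_apply, huniv])
  ext A _
  exact (ENNReal.add_right_inj (measure_ne_top μ A)).1 (congrArg (· A) hμμ)

end Ergodic

/-! ### Inverses of convex branches -/

section Branch

variable {τ : ℝ → ℝ} {u v w : ℝ}

theorem sub_le_one_div_mul_of_convexOn {s : ℝ} (hτ : ConvexOn ℝ (Ico u v) τ) (hu : τ u = 0)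
    (hs : 0 < s) (hderiv : HasDerivWithinAt τ s (Ici u) u) {y : ℝ} (hy : y ∈ Ico u v) :
    y - u ≤ 1 / s * τ y := by
  rcases hy.1.eq_or_lt with rfl | huy
  · simp [hu]
  have hslope := hτ.le_slope_of_hasDerivWithinAt_Ioi ⟨le_rfl, huy.trans hy.2⟩ hy huy
    (hderiv.mono Ioi_subset_Ici_self)
  rw [slope_def_field, hu, sub_zero, le_div_iff₀ (sub_pos.2 huy)] at hslope
  rwa [one_div, ← div_eq_inv_mul, le_div_iff₀' hs]

/-- The points of the branch `[u, v)` of `τ` at which `τ` is at most `x`. -/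
def branchSublevel (τ : ℝ → ℝ) (u v x : ℝ) : Set ℝ := {y ∈ Ico u v | τ y ≤ x}

/-- The inverse of the branch of `τ` on `[u, v)`, extended by `v` beyond the range of the
branch. Being a supremum of sublevel sets, it does not require `τ` to be continuous. -/
noncomputable def inverseBranch (τ : ℝ → ℝ) (u v x : ℝ) : ℝ := sSup (branchSublevel τ u v x)

theorem branchSublevel_subset (x : ℝ) : branchSublevel τ u v x ⊆ Ico u v := sep_subset _ _

theorem bddAbove_branchSublevel (x : ℝ) : BddAbove (branchSublevel τ u v x) :=
  bddAbove_Ico.mono (branchSublevel_subset x)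

theorem ordConnected_branchSublevel (hτ : ConvexOn ℝ (Ico u v) τ) (x : ℝ) :
    (branchSublevel τ u v x).OrdConnected :=
  (hτ.convex_le x).ordConnected

theorem left_mem_branchSublevel (huv : u < v) (hu : τ u = 0) {x : ℝ} (hx : 0 ≤ x) :
    u ∈ branchSublevel τ u v x :=
  ⟨left_mem_Ico.2 huv, hu.trans_le hx⟩

theorem inverseBranch_mem_Icc (huv : u < v) (hu : τ u = 0) {x : ℝ} (hx : 0 ≤ x) :
    inverseBranch τ u v x ∈ Icc u v :=
  have hmem := left_mem_branchSublevel huv hu hx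
  ⟨le_csSup (bddAbove_branchSublevel x) hmem,
    csSup_le ⟨u, hmem⟩ fun _ hy => (branchSublevel_subset x hy).2.le⟩

theorem inverseBranch_le (huv : u < v) (hu : τ u = 0) (hw : 0 ≤ w)
    (hτ : ∀ y ∈ Ico u v, y - u ≤ w * τ y) {x : ℝ} (hx : 0 ≤ x) :
    inverseBranch τ u v x ≤ u + w * x :=
  csSup_le ⟨u, left_mem_branchSublevel huv hu hx⟩ fun y hy =>
    sub_le_iff_le_add'.1 ((hτ y hy.1).trans (mul_le_mul_of_nonneg_left hy.2 hw))

open scoped Pointwise in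
theorem concaveOn_inverseBranch (huv : u < v) (hu : τ u = 0) (hτ : ConvexOn ℝ (Ico u v) τ) :
    ConcaveOn ℝ (Ici 0) (inverseBranch τ u v) := by
  refine ⟨convex_Ici 0, fun x hx y hy α β hα hβ hαβ => ?_⟩
  have hnonempty {z : ℝ} (hz : 0 ≤ z) : (branchSublevel τ u v z).Nonempty :=
    ⟨u, left_mem_branchSublevel huv hu hz⟩
  have hbdd {γ : ℝ} (hγ : 0 ≤ γ) (z : ℝ) : BddAbove (γ • branchSublevel τ u v z) :=
    (bddAbove_branchSublevel z).smul_of_nonneg hγ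
  rw [inverseBranch, inverseBranch, inverseBranch, ← Real.sSup_smul_of_nonneg hα,
    ← Real.sSup_smul_of_nonneg hβ,
    ← csSup_add ((hnonempty hx).smul_set) (hbdd hα x) ((hnonempty hy).smul_set) (hbdd hβ y)]
  refine csSup_le_csSup (bddAbove_branchSublevel _)
    ((hnonempty hx).smul_set.add (hnonempty hy).smul_set) ?_
  rintro _ ⟨_, ⟨p, hp, rfl⟩, _, ⟨q, hq, rfl⟩, rfl⟩
  refine ⟨hτ.1 hp.1 hq.1 hα hβ hαβ, (hτ.2 hp.1 hq.1 hα hβ hαβ).trans ?_⟩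
  exact add_le_add (mul_le_mul_of_nonneg_left hp.2 hα) (mul_le_mul_of_nonneg_left hq.2 hβ)

theorem measureReal_branchSublevel {m : Measure ℝ} [IsFiniteMeasure m] [NullSingletonClass m]
    (huv : u < v) (hu : τ u = 0) (hτ : ConvexOn ℝ (Ico u v) τ) {x : ℝ} (hx : 0 ≤ x) :
    m.real (branchSublevel τ u v x) = distFun m (inverseBranch τ u v x) - distFun m u := by
  have hmem := left_mem_branchSublevel huv hu hx
  rw [← measureReal_Ioc_eq_distFun_sub (inverseBranch_mem_Icc huv hu hx).1]
  refine le_antisymm ?_ ?_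
  · rw [measureReal_congr Ioc_ae_eq_Icc]
    exact measureReal_mono fun y hy =>
      ⟨(branchSublevel_subset x hy).1, le_csSup (bddAbove_branchSublevel x) hy⟩
  · rw [measureReal_congr Ioo_ae_eq_Ioc.symm]
    refine measureReal_mono fun y hy => ?_
    obtain ⟨z, hz, hyz⟩ := exists_lt_of_lt_csSup ⟨u, hmem⟩ hy.2
    exact (ordConnected_branchSublevel hτ x).out hmem hz ⟨hy.1.le, hyz.le⟩

end Branch

/-! ### Push-forward under a piecewise convex map -/

/-- The map `τ` of `[0,1]` is convex on each of the disjoint intervals `[l p, r p)`, vanishes at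
`l p`, and the inverse of that branch grows at most at rate `w p`; for a branch with a right
derivative at `l p` one takes `w p = 1 / τ'(l p)`. The last two fields say that the branches
near `0` are jointly expanding and that arbitrarily small points lie in the interior of no
branch. -/
structure IsPiecewiseConvex {ι : Type*} (τ : ℝ → ℝ) (l r w : ι → ℝ) : Prop where
  mapsTo : MapsTo τ (Icc 0 1) (Icc 0 1)
  left_nonneg : ∀ p, 0 ≤ l p
  left_lt_right : ∀ p, l p < r p
  right_le_one : ∀ p, r p ≤ 1
  pairwise_disjoint : Pairwise (Function.onFun Disjoint fun p => Ico (l p) (r p))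
  ae_mem_iUnion : ∀ᵐ x ∂lam, x ∈ ⋃ p, Ico (l p) (r p)
  convexOn : ∀ p, ConvexOn ℝ (Ico (l p) (r p)) τ
  map_left : ∀ p, τ (l p) = 0
  sub_left_le : ∀ p, ∀ x ∈ Ico (l p) (r p), x - l p ≤ w p * τ x
  summable : Summable w
  exists_tsum_lt_one : ∃ δ > 0, ∑' p, {p | l p < δ}.indicator w p < 1
  frequently_notMem_Ioo : ∃ᶠ t in 𝓝[>] (0 : ℝ), ∀ p, t ∉ Ioo (l p) (r p)

/-- The map equal to `τ` on the branches `[l p, r p)` and to `0` elsewhere: a Borel modification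
of `τ`, which itself is arbitrary off the branches. -/
noncomputable def branchMap {ι : Type*} (τ : ℝ → ℝ) (l r : ι → ℝ) : ℝ → ℝ :=
  (⋃ p, Ico (l p) (r p)).indicator τ

theorem branchMap_preimage_Iic {ι : Type*} {τ : ℝ → ℝ} {l r : ι → ℝ} {x : ℝ} (hx : 0 ≤ x) :
    branchMap τ l r ⁻¹' Iic x =
      (⋃ p, branchSublevel τ (l p) (r p) x) ∪ (⋃ p, Ico (l p) (r p))ᶜ := by
  have hsublevel : ⋃ p, branchSublevel τ (l p) (r p) x =
      (⋃ p, Ico (l p) (r p)) ∩ {y | τ y ≤ x} := (iUnion_inter _ _).symm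
  ext y
  by_cases hy : y ∈ ⋃ p, Ico (l p) (r p)
  · simp only [hsublevel, branchMap, mem_preimage, indicator_of_mem hy, mem_Iic, mem_union,
      mem_inter_iff, hy, true_and, mem_ofPred_eq, mem_compl_iff, not_true, or_false]
  · simp only [branchMap, mem_preimage, indicator_of_notMem hy, mem_Iic, hx, mem_union,
      mem_compl_iff, hy, not_false_eq_true, or_true]

namespace IsPiecewiseConvex

variable {ι : Type*} {τ : ℝ → ℝ} {l r w : ι → ℝ}

theorem mapsTo_branch (h : IsPiecewiseConvex τ l r w) (p : ι) :
    MapsTo τ (Ico (l p) (r p)) (Icc 0 1) :=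
  h.mapsTo.mono_left fun _ hx => ⟨(h.left_nonneg p).trans hx.1, hx.2.le.trans (h.right_le_one p)⟩

theorem weight_pos (h : IsPiecewiseConvex τ l r w) (p : ι) : 0 < w p := by
  obtain ⟨x, hx⟩ := nonempty_Ioo.2 (h.left_lt_right p)
  have hx' := Ioo_subset_Ico_self hx
  have hpos : 0 < w p * τ x := (sub_pos.2 hx.1).trans_le (h.sub_left_le p x hx')
  exact pos_of_mul_pos_left hpos (h.mapsTo_branch p hx').1

theorem countable_index (h : IsPiecewiseConvex τ l r w) : Countable ι := by
  have hsupp : Function.support w = univ := eq_univ_of_forall fun p => (h.weight_pos p).ne'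
  exact countable_univ_iff.1 (hsupp ▸ h.summable.countable_support)

theorem branchMap_mem_Icc (h : IsPiecewiseConvex τ l r w) (x : ℝ) :
    branchMap τ l r x ∈ Icc 0 1 := by
  refine indicator_rel_indicator (r := fun y _ => y ∈ Icc (0 : ℝ) 1) (g := τ) (by simp) fun hx => ?_
  obtain ⟨p, hp⟩ := mem_iUnion.1 hx
  exact h.mapsTo_branch p hp

theorem measurableSet_branchSublevel (h : IsPiecewiseConvex τ l r w) (p : ι) (x : ℝ) :
    MeasurableSet (branchSublevel τ (l p) (r p) x) :=
  (ordConnected_branchSublevel (h.convexOn p) x).measurableSet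

theorem measurable_branchMap (h : IsPiecewiseConvex τ l r w) : Measurable (branchMap τ l r) := by
  have := h.countable_index
  refine measurable_of_Iic fun x => ?_
  rcases lt_or_ge x 0 with hx | hx
  · have hempty : branchMap τ l r ⁻¹' Iic x = ∅ :=
      eq_empty_of_forall_notMem fun y hy => (hx.trans_le (h.branchMap_mem_Icc y).1).not_ge hy
    exact hempty ▸ .empty
  · rw [branchMap_preimage_Iic hx]
    exact (MeasurableSet.iUnion fun p => h.measurableSet_branchSublevel p x).union
      (MeasurableSet.iUnion fun p => measurableSet_Ico).compl

theorem branchMap_ae_eq (h : IsPiecewiseConvex τ l r w) : branchMap τ l r =ᵐ[lam] τ :=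
  h.ae_mem_iUnion.mono fun _ hx => indicator_of_mem hx τ

variable {m : Measure ℝ}

theorem mass_map_branchMap (h : IsPiecewiseConvex τ l r w) :
    (m.map (branchMap τ l r)).real univ = m.real univ :=
  map_measureReal_apply h.measurable_branchMap .univ

theorem map_branchMap_Ioi_one (h : IsPiecewiseConvex τ l r w) :
    m.map (branchMap τ l r) (Ioi 1) = 0 := by
  have hempty : branchMap τ l r ⁻¹' Ioi 1 = ∅ :=
    eq_empty_of_forall_notMem fun y hy => (h.branchMap_mem_Icc y).2.not_gt hy
  rw [Measure.map_apply h.measurable_branchMap measurableSet_Ioi, hempty, measure_empty]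

theorem map_branchMap_eq_iff (h : IsPiecewiseConvex τ l r w) (hm : m ≪ lam) :
    m.map (branchMap τ l r) = m ↔
      ∀ A, MeasurableSet A → A ⊆ Icc 0 1 → m (τ ⁻¹' A) = m A := by
  have hpreimage (A : Set ℝ) : m (branchMap τ l r ⁻¹' A) = m (τ ⁻¹' A) :=
    measure_congr (hm.ae_le (h.branchMap_ae_eq.preimage A))
  refine ⟨fun hmap A hA _ => ?_, fun hinv => Measure.ext fun A hA => ?_⟩
  · rw [← hpreimage, ← Measure.map_apply h.measurable_branchMap hA, hmap]
  · have hIcc : branchMap τ l r ⁻¹' (A ∩ Icc 0 1) = branchMap τ l r ⁻¹' A := by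
      rw [preimage_inter, inter_eq_left]
      exact fun x _ => h.branchMap_mem_Icc x
    have hcompl : m (Icc 0 1)ᶜ = 0 := hm <| by
      rw [lam, Measure.restrict_apply' measurableSet_Icc, compl_inter_self, measure_empty]
    rw [Measure.map_apply h.measurable_branchMap hA, ← hIcc, hpreimage,
      hinv _ (hA.inter measurableSet_Icc) inter_subset_right, measure_inter_conull hcompl]

section DistFun

variable [IsFiniteMeasure m]

theorem hasSum_distFun_map (h : IsPiecewiseConvex τ l r w) (hm : m ≪ lam) {x : ℝ} (hx : 0 ≤ x) :
    HasSum (fun p => distFun m (inverseBranch τ (l p) (r p) x) - distFun m (l p))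
      (distFun (m.map (branchMap τ l r)) x) := by
  have := h.countable_index
  have : NullSingletonClass m := ⟨fun y => hm (by simp [lam])⟩
  have hdisj : Pairwise (Function.onFun Disjoint fun p => branchSublevel τ (l p) (r p) x) :=
    fun p q hpq => (h.pairwise_disjoint hpq).mono (branchSublevel_subset x)
      (branchSublevel_subset x)
  have hcompl : m (⋃ p, Ico (l p) (r p))ᶜ = 0 := hm h.ae_mem_iUnion
  have hmap : (m.map (branchMap τ l r)) (Iic x) = ∑' p, m (branchSublevel τ (l p) (r p) x) := by
    rw [Measure.map_apply h.measurable_branchMap measurableSet_Iic, branchMap_preimage_Iic hx,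
      measure_congr (union_ae_eq_left_of_ae_eq_empty (ae_eq_empty.2 hcompl)),
      measure_iUnion hdisj fun p => h.measurableSet_branchSublevel p x]
  have hsum : HasSum (fun p => m.real (branchSublevel τ (l p) (r p) x))
      (distFun (m.map (branchMap τ l r)) x) := by
    rw [distFun, measureReal_def, hmap, ENNReal.tsum_toReal_eq fun p => measure_ne_top m _]
    exact ENNReal.hasSum_toReal (hmap ▸ measure_ne_top _ _)
  simpa only [measureReal_branchSublevel (h.left_lt_right _) (h.map_left _) (h.convexOn _) hx]
    using hsum

theorem concaveOn_distFun_map (h : IsPiecewiseConvex τ l r w) (hm : m ≪ lam)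
    (hconc : ∀ p, ConcaveOn ℝ (Icc (l p) (r p)) (distFun m)) :
    ConcaveOn ℝ (Ici 0) (distFun (m.map (branchMap τ l r))) := by
  refine ⟨convex_Ici 0, fun x hx y hy α β hα hβ hαβ => ?_⟩
  have hz : α • x + β • y ∈ Ici (0 : ℝ) := convex_Ici 0 hx hy hα hβ hαβ
  refine hasSum_le (fun p => ?_) (((h.hasSum_distFun_map hm hx).mul_left α).add
    ((h.hasSum_distFun_map hm hy).mul_left β)) (h.hasSum_distFun_map hm hz)
  have hψ {z : ℝ} (hz : 0 ≤ z) : inverseBranch τ (l p) (r p) z ∈ Icc (l p) (r p) :=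
    inverseBranch_mem_Icc (h.left_lt_right p) (h.map_left p) hz
  have hψ_concave := (concaveOn_inverseBranch (h.left_lt_right p) (h.map_left p)
    (h.convexOn p)).2 hx hy hα hβ hαβ
  have hm_concave := ((hconc p).2 (hψ hx) (hψ hy) hα hβ hαβ).trans (monotone_distFun hψ_concave)
  have hleft : (α + β) * distFun m (l p) = distFun m (l p) := by rw [hαβ, one_mul]
  simp only [smul_eq_mul] at hm_concave ⊢
  linarith

theorem exists_distFun_map_le (h : IsPiecewiseConvex τ l r w) :
    ∃ D < 1, ∃ C, ∀ (m : Measure ℝ) [IsFiniteMeasure m] (K : ℝ), HasAntitoneDensity m K →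
      ∀ x, 0 ≤ x → distFun (m.map (branchMap τ l r)) x ≤ (D * K + C * m.real univ) * x := by
  obtain ⟨δ, hδ, hD⟩ := h.exists_tsum_lt_one
  set v : ι → ℝ := {p | l p < δ}.indicator w
  have hv₀ (p : ι) : 0 ≤ v p := indicator_nonneg (fun p _ => (h.weight_pos p).le) p
  refine ⟨∑' p, v p, hD, (∑' p, w p) / δ, fun m _ K hm x hx => ?_⟩
  have hsum : HasSum (fun p => (v p * K + w p / δ * m.real univ) * x)
      (((∑' p, v p) * K + (∑' p, w p) / δ * m.real univ) * x) :=
    (((h.summable.indicator _).hasSum.mul_right K).add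
      ((h.summable.hasSum.div_const δ).mul_right _)).mul_right x
  refine hasSum_le (fun p => ?_) (h.hasSum_distFun_map hm.absolutelyContinuous hx) hsum
  have hw := (h.weight_pos p).le
  have hwx : l p ≤ l p + w p * x := le_add_of_nonneg_right (mul_nonneg hw hx)
  have hψ : distFun m (inverseBranch τ (l p) (r p) x) ≤ distFun m (l p + w p * x) :=
    monotone_distFun (inverseBranch_le (h.left_lt_right p) (h.map_left p) hw (h.sub_left_le p) hx)
  refine (sub_le_sub_right hψ _).trans ?_
  rcases lt_or_ge (l p) δ with hp | hp
  · have hvp : v p = w p := indicator_of_mem (show p ∈ {p | l p < δ} from hp) w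
    calc distFun m (l p + w p * x) - distFun m (l p) ≤ K * (l p + w p * x - l p) :=
          hm.distFun_sub_le hwx
      _ = v p * K * x := by rw [hvp]; ring
      _ ≤ (v p * K + w p / δ * m.real univ) * x :=
          mul_le_mul_of_nonneg_right (le_add_of_nonneg_right (by positivity)) hx
  · calc distFun m (l p + w p * x) - distFun m (l p)
        ≤ m.real univ / δ * (l p + w p * x - l p) := hm.distFun_sub_le_mass_div_mul hδ hp hwx
      _ = w p / δ * m.real univ * x := by ring
      _ ≤ (v p * K + w p / δ * m.real univ) * x := mul_le_mul_of_nonneg_right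
          (le_add_of_nonneg_left (mul_nonneg (hv₀ p) hm.nonneg)) hx

end DistFun

end IsPiecewiseConvex

theorem concaveOn_distFun_of_add_lam_restrict {s : Measure ℝ} [IsFiniteMeasure s] {c : ℝ≥0}
    {t : ℝ} (ht₀ : 0 ≤ t) (ht₁ : t ≤ 1)
    (hconc : ConcaveOn ℝ (Ici 0) (distFun (s + c • lam.restrict (Iic t)))) {u v : ℝ} (hu : 0 ≤ u)
    (ht : t ∉ Ioo u v) : ConcaveOn ℝ (Icc u v) (distFun s) := by
  have hs {x : ℝ} (hx : 0 ≤ x) :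
      distFun s x = distFun (s + c • lam.restrict (Iic t)) x - c * min x t := by
    rw [distFun_add, distFun_smul, distFun_lam_restrict_Iic ht₀ ht₁ hx, add_sub_cancel_right]
  have hconc' : ConcaveOn ℝ (Icc u v) (distFun (s + c • lam.restrict (Iic t))) :=
    hconc.subset (fun _ hx => hu.trans hx.1) (convex_Icc u v)
  have hmin : ConvexOn ℝ (Icc u v) fun x => (c : ℝ) * min x t := by
    by_cases hut : u < t
    · have hvt : v ≤ t := not_lt.1 fun htv => ht ⟨hut, htv⟩
      exact ((convexOn_id (convex_Icc u v)).smul c.2).congr fun x hx => by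
        rw [min_eq_left (hx.2.trans hvt)]; rfl
    · exact (convexOn_const (c * t : ℝ) (convex_Icc u v)).congr fun x hx => by
        rw [min_eq_right ((not_lt.1 hut).trans hx.1)]
  exact (hconc'.sub hmin).congr fun x hx => (hs (hu.trans hx.1)).symm

/-- Push-forward under `T` turns a non-increasing density bounded by `M` times its mass into a
measure whose density is bounded by `M - 1` times that mass. For piecewise convex maps all large
`M` have this property, by a Lasota-Yorke inequality. -/
def ContractsDensityBound (T : ℝ → ℝ) (M : ℝ) : Prop :=
  ∀ (m : Measure ℝ) [IsFiniteMeasure m], HasAntitoneDensity m (M * m.real univ) →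
    ∀ x, 0 ≤ x → distFun (m.map T) x ≤ (M - 1) * m.real univ * x

namespace IsPiecewiseConvex

variable {ι : Type*} {τ : ℝ → ℝ} {l r w : ι → ℝ}

theorem eventually_contractsDensityBound (h : IsPiecewiseConvex τ l r w) :
    ∀ᶠ M in atTop, ContractsDensityBound (branchMap τ l r) M := by
  obtain ⟨D, hD, C, hDC⟩ := h.exists_distFun_map_le
  filter_upwards [eventually_ge_atTop ((C + 1) / (1 - D))] with M hM m _ hm x hx
  have hM' : C + 1 ≤ M * (1 - D) := (div_le_iff₀ (sub_pos.2 hD)).1 hM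
  calc distFun (m.map (branchMap τ l r)) x
      ≤ (D * (M * m.real univ) + C * m.real univ) * x := hDC m _ hm x hx
    _ = (D * M + C) * m.real univ * x := by ring
    _ ≤ (M - 1) * m.real univ * x := by gcongr; linarith

variable {M : ℝ} {m : Measure ℝ} [IsFiniteMeasure m]

theorem hasAntitoneDensity_map (h : IsPiecewiseConvex τ l r w)
    (hM : ContractsDensityBound (branchMap τ l r) M)
    (hm : HasAntitoneDensity m (M * m.real univ)) :
    HasAntitoneDensity (m.map (branchMap τ l r)) (M * m.real univ) where
  measure_Ioi_one := h.map_branchMap_Ioi_one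
  concaveOn := h.concaveOn_distFun_map hm.absolutelyContinuous fun p =>
    hm.concaveOn.subset (fun _ hx => (h.left_nonneg p).trans hx.1) (convex_Icc _ _)
  distFun_le x hx := (hM m hm x hx).trans <| mul_le_mul_of_nonneg_right
    (mul_le_mul_of_nonneg_right (sub_one_lt M).le measureReal_nonneg) hx

theorem hasAntitoneDensity_map_iterate (h : IsPiecewiseConvex τ l r w)
    (hM : ContractsDensityBound (branchMap τ l r) M)
    (hm : HasAntitoneDensity m (M * m.real univ)) (n : ℕ) :
    HasAntitoneDensity (m.map (branchMap τ l r)^[n]) (M * m.real univ) := by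
  have hT := h.measurable_branchMap
  induction n with
  | zero => rwa [Function.iterate_zero, Measure.map_id]
  | succ n ih =>
    have hmass : (m.map (branchMap τ l r)^[n]).real univ = m.real univ :=
      map_measureReal_apply (hT.iterate n) .univ
    rw [Function.iterate_succ', ← Measure.map_map hT (hT.iterate n), ← hmass]
    exact h.hasAntitoneDensity_map hM (hmass.symm ▸ ih)

/-! ### Contraction -/

theorem exists_residual (h : IsPiecewiseConvex τ l r w)
    (hM : ContractsDensityBound (branchMap τ l r) M) (hM₁ : 1 ≤ M) {t : ℝ} (ht₀ : 0 < t)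
    (ht : 2 * M * t ≤ 1) (hcut : ∀ p, t ∉ Ioo (l p) (r p))
    (hm : HasAntitoneDensity m (M * m.real univ)) :
    ∃ s : Measure ℝ, IsFiniteMeasure s ∧
      s + (m.real univ / 2).toNNReal • lam.restrict (Iic t) = m ∧
      s.real univ = (1 - t / 2) * m.real univ ∧
      HasAntitoneDensity (s.map (branchMap τ l r)) (M * s.real univ) := by
  have ht₁ : t ≤ 1 := by nlinarith
  set k : Measure ℝ := (m.real univ / 2).toNNReal • lam.restrict (Iic t) with hk
  have hkm : k ≤ m := hm.half_mass_smul_lam_restrict_Iic_le ht₀.le ht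
  have hadd : m - k + k = m := Measure.sub_add_cancel_of_le hkm
  have hmass_sub : (m - k).real univ = (1 - t / 2) * m.real univ := by
    have hreal : (m - k).real univ + k.real univ = m.real univ := by
      rw [← measureReal_add_apply, hadd]
    have hkuniv : k.real univ = m.real univ / 2 * t := by
      rw [hk, measureReal_nnreal_smul_apply, mass_lam_restrict_Iic ht₀.le ht₁,
        Real.coe_toNNReal _ (by positivity)]
    linarith
  have hsm : m - k ≤ m := Measure.sub_le
  refine ⟨m - k, inferInstance, hadd, hmass_sub, h.map_branchMap_Ioi_one, ?_, fun x hx => ?_⟩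
  · refine h.concaveOn_distFun_map
      ((Measure.absolutelyContinuous_of_le hsm).trans hm.absolutelyContinuous) fun p => ?_
    refine concaveOn_distFun_of_add_lam_restrict ht₀.le ht₁ ?_ (h.left_nonneg p) (hcut p)
      (c := (m.real univ / 2).toNNReal)
    rw [← hk, hadd]
    exact hm.concaveOn
  · calc distFun ((m - k).map (branchMap τ l r)) x
        ≤ distFun (m.map (branchMap τ l r)) x := ENNReal.toReal_mono (measure_ne_top _ _)
          (Measure.map_mono hsm h.measurable_branchMap _)
      _ ≤ (M - 1) * m.real univ * x := hM m hm x hx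
      _ ≤ M * (1 - t / 2) * m.real univ * x := by gcongr; linarith
      _ = M * (m - k).real univ * x := by rw [hmass_sub, mul_assoc M]

theorem abs_measureReal_map_iterate_sub_le (h : IsPiecewiseConvex τ l r w)
    (hM : ContractsDensityBound (branchMap τ l r) M) (hM₁ : 1 ≤ M) {t : ℝ} (ht₀ : 0 < t)
    (ht : 2 * M * t ≤ 1) (hcut : ∀ p, t ∉ Ioo (l p) (r p)) (A : Set ℝ)
    (n : ℕ) {m₁ m₂ : Measure ℝ} [IsFiniteMeasure m₁] [IsFiniteMeasure m₂]
    (h₁ : HasAntitoneDensity m₁ (M * m₁.real univ)) (h₂ : HasAntitoneDensity m₂ (M * m₂.real univ))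
    (hmass : m₁.real univ = m₂.real univ) :
    |(m₁.map (branchMap τ l r)^[n]).real A - (m₂.map (branchMap τ l r)^[n]).real A| ≤
      (1 - t / 2) ^ n * m₁.real univ := by
  have hT := h.measurable_branchMap
  induction n generalizing m₁ m₂ with
  | zero =>
    simp only [Function.iterate_zero, Measure.map_id, pow_zero, one_mul]
    exact abs_sub_le_of_nonneg_of_le measureReal_nonneg (measureReal_mono (subset_univ A))
      measureReal_nonneg (hmass ▸ measureReal_mono (subset_univ A))
  | succ n ih =>
    obtain ⟨s₁, _, hadd₁, hs₁, hs₁'⟩ := h.exists_residual hM hM₁ ht₀ ht hcut h₁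
    obtain ⟨s₂, _, hadd₂, hs₂, hs₂'⟩ := h.exists_residual hM hM₁ ht₀ ht hcut h₂
    set k : Measure ℝ := (m₁.real univ / 2).toNNReal • lam.restrict (Iic t)
    rw [← hmass] at hadd₂ hs₂
    have hsplit (s : Measure ℝ) [IsFiniteMeasure s] :
        ((s + k).map (branchMap τ l r)^[n + 1]).real A =
          ((s.map (branchMap τ l r)).map (branchMap τ l r)^[n]).real A +
            (k.map (branchMap τ l r)^[n + 1]).real A := by
      rw [Measure.map_add _ _ (hT.iterate (n + 1)), measureReal_add_apply,
        Measure.map_map (hT.iterate n) hT, ← Function.iterate_succ]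
    rw [← hadd₁, ← hadd₂, hsplit, hsplit, add_sub_add_right_eq_sub, hadd₁]
    rw [← h.mass_map_branchMap (m := s₁)] at hs₁ hs₁'
    rw [← h.mass_map_branchMap (m := s₂)] at hs₂ hs₂'
    refine (ih hs₁' hs₂' (hs₁.trans hs₂.symm)).trans_eq ?_
    rw [hs₁, pow_succ, mul_assoc]

theorem eventually_exists_contraction (h : IsPiecewiseConvex τ l r w) :
    ∀ᶠ M in atTop, ContractsDensityBound (branchMap τ l r) M ∧ ∃ ρ, 0 ≤ ρ ∧ ρ < 1 ∧
      ∀ (A : Set ℝ) (n : ℕ) (m₁ m₂ : Measure ℝ) [IsFiniteMeasure m₁] [IsFiniteMeasure m₂],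
        HasAntitoneDensity m₁ (M * m₁.real univ) →
        HasAntitoneDensity m₂ (M * m₂.real univ) → m₁.real univ = m₂.real univ →
        |(m₁.map (branchMap τ l r)^[n]).real A - (m₂.map (branchMap τ l r)^[n]).real A| ≤
          ρ ^ n * m₁.real univ := by
  filter_upwards [h.eventually_contractsDensityBound, eventually_ge_atTop 1] with M hM hM₁
  have hM₀ : 0 < 2 * M := by linarith
  obtain ⟨t, hcut, ht₀, ht⟩ := (h.frequently_notMem_Ioo.and_eventually
    (Ioo_mem_nhdsGT (one_div_pos.2 hM₀))).exists
  have ht' : 2 * M * t ≤ 1 := ((lt_div_iff₀' hM₀).1 ht).le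
  refine ⟨hM, 1 - t / 2, by nlinarith, by linarith, ?_⟩
  exact fun A n m₁ m₂ _ _ h₁ h₂ hmass =>
    h.abs_measureReal_map_iterate_sub_le hM hM₁ ht₀ ht' hcut A n h₁ h₂ hmass

/-! ### Existence and uniqueness of the invariant measure -/

theorem exists_tendsto_map_iterate (h : IsPiecewiseConvex τ l r w) :
    ∃ K, (∀ n, HasAntitoneDensity (lam.map (branchMap τ l r)^[n]) K) ∧
      ∀ A, ∃ a, Tendsto (fun n => (lam.map (branchMap τ l r)^[n]).real A) atTop (𝓝 a) := by
  have hT := h.measurable_branchMap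
  obtain ⟨M, ⟨hM, ρ, -, hρ, hcontr⟩, hM₁⟩ :=
    (h.eventually_exists_contraction.and (eventually_ge_atTop 1)).exists
  have hlam : HasAntitoneDensity lam (M * lam.real univ) := by
    rw [probReal_univ, mul_one]
    exact hasAntitoneDensity_lam.mono hM₁
  have hmap : HasAntitoneDensity (lam.map (branchMap τ l r))
      (M * (lam.map (branchMap τ l r)).real univ) := by
    rw [h.mass_map_branchMap]
    exact h.hasAntitoneDensity_map hM hlam
  refine ⟨_, h.hasAntitoneDensity_map_iterate hM hlam, fun A => ?_⟩
  refine cauchySeq_tendsto_of_complete (cauchySeq_of_le_geometric ρ 1 hρ fun n => ?_)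
  rw [Real.dist_eq, Function.iterate_succ, ← Measure.map_map (hT.iterate n) hT, one_mul]
  simpa using hcontr A n _ _ hlam hmap h.mass_map_branchMap.symm

theorem exists_invariant (h : IsPiecewiseConvex τ l r w) :
    ∃ μ : Measure ℝ, IsProbabilityMeasure μ ∧ (∃ K, HasAntitoneDensity μ K) ∧
      MeasurePreserving (branchMap τ l r) μ μ := by
  have hT := h.measurable_branchMap
  obtain ⟨K, hK, hlim⟩ := h.exists_tendsto_map_iterate
  have hprob (n : ℕ) : IsProbabilityMeasure (lam.map (branchMap τ l r)^[n]) :=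
    Measure.isProbabilityMeasure_map (hT.iterate n).aemeasurable
  obtain ⟨μ, _, hμ⟩ := exists_measure_tendsto_of_le_s6 (fun n => (hK n).le_smul_lam)
    fun A _ => hlim A
  have hmass : μ.real univ = 1 :=
    tendsto_nhds_unique (hμ univ .univ) (tendsto_const_nhds.congr fun n => probReal_univ.symm)
  refine ⟨μ, ⟨(ENNReal.toReal_eq_one_iff _).1 hmass⟩, ⟨K, .of_tendsto hK hμ⟩, hT,
    Measure.ext fun A hA => (measureReal_eq_measureReal_iff).1 ?_⟩
  have hshift : Tendsto (fun n => (lam.map (branchMap τ l r)^[n]).real (branchMap τ l r ⁻¹' A))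
      atTop (𝓝 (μ.real A)) := by
    refine ((tendsto_add_atTop_iff_nat 1).2 (hμ A hA)).congr fun n => ?_
    rw [Function.iterate_succ', ← Measure.map_map hT (hT.iterate n), map_measureReal_apply hT hA]
  rw [map_measureReal_apply hT hA]
  exact tendsto_nhds_unique (hμ _ (hT hA)) hshift

theorem measureReal_eq_of_preimage_eq (h : IsPiecewiseConvex τ l r w) {K : ℝ} {m₁ m₂ : Measure ℝ}
    [IsFiniteMeasure m₁] [IsFiniteMeasure m₂] (h₁ : HasAntitoneDensity m₁ K)
    (h₂ : HasAntitoneDensity m₂ K) (hmass : m₁.real univ = m₂.real univ) {A : Set ℝ}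
    (hA : MeasurableSet A) (hTA : branchMap τ l r ⁻¹' A = A) : m₁.real A = m₂.real A := by
  rcases eq_or_ne (m₁.real univ) 0 with h₀ | h₀
  · rw [measureReal_mono_null (subset_univ A) h₀,
      measureReal_mono_null (subset_univ A) (hmass ▸ h₀)]
  have hpos : 0 < m₁.real univ := measureReal_nonneg.lt_of_ne' h₀
  obtain ⟨M, ⟨-, ρ, hρ₀, hρ₁, hcontr⟩, hM⟩ := (h.eventually_exists_contraction.and
    (eventually_ge_atTop (K / m₁.real univ))).exists
  have hK : K ≤ M * m₁.real univ := (div_le_iff₀ hpos).1 hM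
  have hiter (n : ℕ) (m : Measure ℝ) : (m.map (branchMap τ l r)^[n]).real A = m.real A := by
    rw [map_measureReal_apply (h.measurable_branchMap.iterate n) hA,
      Function.IsFixedPt.preimage_iterate hTA n]
  have hgeom : Tendsto (fun n => ρ ^ n * m₁.real univ) atTop (𝓝 0) := by
    simpa using (tendsto_pow_atTop_nhds_zero_of_lt_one hρ₀ hρ₁).mul_const (m₁.real univ)
  have hle : |m₁.real A - m₂.real A| ≤ 0 := ge_of_tendsto' hgeom fun n => by
    simpa only [hiter] using hcontr A n m₁ m₂ (h₁.mono hK) (h₂.mono (hmass ▸ hK)) hmass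
  exact sub_eq_zero.1 (abs_nonpos_iff.1 hle)

theorem restrict_lam_of_preimage_eq (h : IsPiecewiseConvex τ l r w) {A : Set ℝ}
    (hA : MeasurableSet A) (hTA : branchMap τ l r ⁻¹' A = A) :
    lam.restrict A = (lam.real A).toNNReal • lam := by
  refine ext_of_distFun_of_absolutelyContinuous
    (Measure.absolutelyContinuous_of_le Measure.restrict_le_self)
    Measure.smul_absolutelyContinuous fun t ht => ?_
  have hmass : (lam.restrict (Iic t)).real univ = (t.toNNReal • lam).real univ := by
    rw [mass_lam_restrict_Iic ht.1.le ht.2, measureReal_nnreal_smul_apply, probReal_univ, mul_one,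
      Real.coe_toNNReal t ht.1.le]
  have hlam : distFun lam t = t := by
    rw [distFun, ← measureReal_restrict_apply_univ, mass_lam_restrict_Iic ht.1.le ht.2]
  have ht' : (t.toNNReal : ℝ) * 1 ≤ 1 := by simpa using ht.2
  have hA' := h.measureReal_eq_of_preimage_eq (hasAntitoneDensity_lam_restrict_Iic ht.1.le ht.2)
    ((hasAntitoneDensity_lam.smul t.toNNReal).mono ht') hmass hA hTA
  calc distFun (lam.restrict A) t = (lam.restrict (Iic t)).real A := by
        rw [distFun, measureReal_restrict_apply measurableSet_Iic, measureReal_restrict_apply hA,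
          inter_comm]
    _ = t.toNNReal * lam.real A := hA'.trans (measureReal_nnreal_smul_apply _)
    _ = distFun ((lam.real A).toNNReal • lam) t := by
        rw [distFun_smul, hlam, Real.coe_toNNReal t ht.1.le,
          Real.coe_toNNReal _ measureReal_nonneg, mul_comm]

theorem preErgodic_branchMap (h : IsPiecewiseConvex τ l r w) :
    PreErgodic (branchMap τ l r) lam := by
  refine ⟨fun A hA hTA => eventuallyConst_set'.2 ?_⟩
  have hprod : lam.real A = lam.real A * lam.real A := by
    simpa [measureReal_restrict_apply hA, measureReal_nnreal_smul_apply] using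
      congrArg (fun m : Measure ℝ => m.real A) (h.restrict_lam_of_preimage_eq hA hTA)
  rcases eq_or_ne (lam.real A) 0 with h₀ | h₀
  · exact .inl (ae_eq_empty.2 ((measureReal_eq_zero_iff).1 h₀))
  · have h₁ : lam.real A = 1 := mul_left_cancel₀ h₀ (by rw [← hprod, mul_one])
    exact .inr (ae_eq_univ.2 ((prob_compl_eq_zero_iff hA).2 ((ENNReal.toReal_eq_one_iff _).1 h₁)))

end IsPiecewiseConvex

theorem stmt6_general {ι : Type*} {τ : ℝ → ℝ} {l r w : ι → ℝ} (h : IsPiecewiseConvex τ l r w) :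
    ∃ f : ℝ → ℝ, Integrable f lam ∧ (∀ x ∈ Icc (0 : ℝ) 1, 0 ≤ f x) ∧ AntitoneOn f (Icc 0 1) ∧
      ∫ x, f x ∂lam = 1 ∧
      (∀ A : Set ℝ, MeasurableSet A → A ⊆ Icc 0 1 →
        lam.withDensity (fun x => ENNReal.ofReal (f x)) (τ ⁻¹' A) =
        lam.withDensity (fun x => ENNReal.ofReal (f x)) A) ∧
      ∀ ν : Measure ℝ, IsProbabilityMeasure ν → ν ≪ lam →
        (∀ A : Set ℝ, MeasurableSet A → A ⊆ Icc 0 1 → ν (τ ⁻¹' A) = ν A) →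
        ν = lam.withDensity fun x => ENNReal.ofReal (f x) := by
  obtain ⟨μ, _, ⟨K, hK⟩, hμ⟩ := h.exists_invariant
  obtain ⟨f, hf, hf₀, -, hfμ⟩ := hK.exists_density
  have hint : Integrable f lam := (hf.antitoneOn _).integrableOn_isCompact isCompact_Icc
  have hone : ∫ x, f x ∂lam = 1 := by
    rw [integral_eq_lintegral_of_nonneg_ae (.of_forall hf₀) hint.aestronglyMeasurable,
      ← setLIntegral_univ, ← withDensity_apply _ .univ, ← hfμ, measure_univ, ENNReal.toReal_one]
  have hac := hK.absolutelyContinuous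
  refine ⟨f, hint, fun x _ => hf₀ x, hf.antitoneOn _, hone, ?_, ?_⟩ <;> rw [← hfμ]
  · exact (h.map_branchMap_eq_iff hac).1 hμ.map_eq
  · exact fun ν _ hν hinv => eq_of_preErgodic_of_absolutelyContinuous h.preErgodic_branchMap hν hac
      ⟨h.measurable_branchMap, (h.map_branchMap_eq_iff hν).2 hinv⟩ hμ (by simp)

namespace TpcInftyZero

variable {τ : ℝ → ℝ} {a c b c' d e : ℕ → ℝ}

theorem left_pos (h : TpcInftyZero τ a c b c' d e) : ∀ p, 0 < Sum.elim a b p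
  | .inl i => (h.b_pos 0).trans_le (h.a_mem i).1
  | .inr j => h.b_pos j

theorem left_lt_right (h : TpcInftyZero τ a c b c' d e) :
    ∀ p, Sum.elim a b p < Sum.elim c c' p
  | .inl i => (h.a_mem i).2.1
  | .inr j => h.b_lt j

theorem pairwise_disjoint (h : TpcInftyZero τ a c b c' d e) :
    Pairwise (Function.onFun Disjoint fun p => Ico (Sum.elim a b p) (Sum.elim c c' p)) := by
  convert h.branch_disj using 3 with p
  cases p <;> rfl

theorem ae_mem_iUnion (h : TpcInftyZero τ a c b c' d e) :
    ∀ᵐ x ∂lam, x ∈ ⋃ p, Ico (Sum.elim a b p) (Sum.elim c c' p) := by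
  obtain ⟨E, hE, hcover⟩ := h.cover
  refine (ae_restrict_iff' measurableSet_Icc).2 ?_
  filter_upwards [hE.ae_notMem volume] with x hxE hx
  rw [iUnion_sum]
  exact (hcover hx).resolve_right hxE

theorem summable_weight (h : TpcInftyZero τ a c b c' d e) :
    Summable (Sum.elim (fun i => 1 / d i) fun j => 1 / e j) :=
  Summable.sum _ h.sum_d h.sum_e

theorem tsum_indicator_lt_one (h : TpcInftyZero τ a c b c' d e) :
    ∑' p, {p | Sum.elim a b p < b 0}.indicator
      (Sum.elim (fun i => 1 / d i) fun j => 1 / e j) p < 1 := by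
  have hinr : HasSum (Sum.elim (fun _ : ℕ => 0) fun j => 1 / e j) (0 + ∑' j, 1 / e j) :=
    HasSum.sum hasSum_zero h.sum_e.hasSum
  refine (hasSum_le (fun p => ?_) (h.summable_weight.indicator _).hasSum hinr).trans_lt ?_
  · rcases p with i | j
    · exact (indicator_of_notMem (s := {p | Sum.elim a b p < b 0}) (h.a_mem i).1.not_gt _).le
    · exact indicator_le_self' (fun _ _ => (one_div_pos.2 (h.e_pos j)).le) _
  · rw [zero_add]
    exact h.D₁_lt

theorem isPiecewiseConvex (h : TpcInftyZero τ a c b c' d e) :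
    IsPiecewiseConvex τ (Sum.elim a b) (Sum.elim c c')
      (Sum.elim (fun i => 1 / d i) fun j => 1 / e j) where
  mapsTo := h.mapsTo
  left_nonneg p := (h.left_pos p).le
  left_lt_right := h.left_lt_right
  right_le_one := Sum.rec (fun i => (h.a_mem i).2.2) h.c'_le
  pairwise_disjoint := h.pairwise_disjoint
  ae_mem_iUnion := h.ae_mem_iUnion
  convexOn := Sum.rec h.conv_a h.conv_b
  map_left := Sum.rec h.map_a h.map_b
  sub_left_le := Sum.rec
    (fun i _ => sub_le_one_div_mul_of_convexOn (h.conv_a i) (h.map_a i) (h.d_pos i) (h.deriv_a i))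
    (fun j _ => sub_le_one_div_mul_of_convexOn (h.conv_b j) (h.map_b j) (h.e_pos j) (h.deriv_b j))
  summable := h.summable_weight
  exists_tsum_lt_one := ⟨b 0, h.b_pos 0, h.tsum_indicator_lt_one⟩
  frequently_notMem_Ioo := by
    have hb : Tendsto b atTop (𝓝[>] 0) :=
      tendsto_nhdsWithin_iff.2 ⟨h.b_lim, .of_forall h.b_pos⟩
    refine hb.frequently (.of_forall fun j p hj => ?_)
    rcases eq_or_ne p (.inr j) with rfl | hp
    · exact lt_irrefl _ hj.1
    · exact disjoint_left.1 (h.pairwise_disjoint hp) ⟨hj.1.le, hj.2⟩ ⟨le_rfl, h.b_lt j⟩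

end TpcInftyZero

/-- Any `τ ∈ T_pc^{∞,0}(I)` admits a unique absolutely continuous invariant probability
measure `μ = f*·λ`, whose density `f*` is non-negative and non-increasing. -/
theorem stmt6 (τ : ℝ → ℝ) (a c b c' d e : ℕ → ℝ)
    (hτ : TpcInftyZero τ a c b c' d e) :
    ∃ f : ℝ → ℝ, MeasureTheory.Integrable f lam ∧
      (∀ x ∈ Set.Icc (0:ℝ) 1, 0 ≤ f x) ∧
      AntitoneOn f (Set.Icc 0 1) ∧
      (∫ x, f x ∂lam) = 1 ∧
      (∀ A : Set ℝ, MeasurableSet A → A ⊆ Set.Icc 0 1 →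
        lam.withDensity (fun x => ENNReal.ofReal (f x)) (τ ⁻¹' A) =
        lam.withDensity (fun x => ENNReal.ofReal (f x)) A) ∧
      (∀ ν : MeasureTheory.Measure ℝ, MeasureTheory.IsProbabilityMeasure ν →
        ν ≪ lam →
        (∀ A : Set ℝ, MeasurableSet A → A ⊆ Set.Icc 0 1 → ν (τ ⁻¹' A) = ν A) →
        ν = lam.withDensity (fun x => ENNReal.ofReal (f x))) := by
  exact stmt6_general hτ.isPiecewiseConvex
end
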